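/- arXiv:2109.08656 — 4 statements merged into one kernel-verified Lean document; each statement's English description precedes it below -/
import Mathlib

section
/- Let ℓ be a prime number, r a positive integer, Γ a group, and ρ₁, ρ₂ : Γ → GL_r(ℤ_ℓ) group homomorphisms into the group of invertible r×r matrices over the ℓ-adic integers. Suppose there exists an element γ ∈ Γ with tr ρ₁(γ) ≠ tr ρ₂(γ). Then there exist a finite group G, a surjective group homomorphism π : Γ → G, and a subset C ⊆ G such that: (1) the order of G is at most (ℓ^(2r²) − 1)/(ℓ − 1); (2) C is nonempty and closed under conjugation in G; and (3) for every γ ∈ Γ, if π(γ) ∈ C then tr ρ₁(γ) ≠ tr ρ₂(γ). -/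
open Matrix

/-- Reduction modulo `ℓ` on a submodule of a finite free module. -/
theorem exists_reduction (ℓ : ℕ) [Fact ℓ.Prime] {M : Type*} [AddCommGroup M] [Module ℤ_[ℓ] M]
    [Module.Free ℤ_[ℓ] M] [Module.Finite ℤ_[ℓ] M] (A : Submodule ℤ_[ℓ] M) :
    ∃ n ≤ Module.finrank ℤ_[ℓ] M, ∃ φ : A →+ (Fin n → ZMod ℓ),
      ∀ a, φ a = 0 → ∃ b : A, a = (ℓ : ℤ_[ℓ]) • b := by
  let b := Module.finBasis ℤ_[ℓ] A
  refine ⟨Module.finrank ℤ_[ℓ] A, Submodule.finrank_le A,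
    ⟨⟨fun a i => PadicInt.toZMod (b.repr a i), ?_⟩, ?_⟩, ?_⟩
  · ext i; simp
  · intro x y; ext i; simp
  · intro a ha
    have h : ∀ i, (ℓ : ℤ_[ℓ]) ∣ b.repr a i := by
      intro i
      have hi : PadicInt.toZMod (b.repr a i) = 0 := congrFun ha i
      rw [← RingHom.mem_ker, PadicInt.ker_toZMod, PadicInt.maximalIdeal_eq_span_p,
        Ideal.mem_span_singleton] at hi
      exact hi
    choose d hd using h
    refine ⟨∑ i, d i • b i, ?_⟩
    rw [Finset.smul_sum]
    conv_lhs => rw [← b.sum_repr a]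
    refine Finset.sum_congr rfl fun i _ => ?_
    rw [hd i, smul_smul]

theorem generic_serre (ℓ : ℕ) [hl : Fact ℓ.Prime] {M : Type*} [Ring M] [Algebra ℤ_[ℓ] M]
    [Module.Free ℤ_[ℓ] M] [Module.Finite ℤ_[ℓ] M] (Γ : Type*) [Group Γ] (ρ : Γ →* M)
    (f : M →ₗ[ℤ_[ℓ]] ℤ_[ℓ]) (hf : ∀ x y, f (x * y) = f (y * x))
    (h1 : ∀ x : M, (1 : M) ≠ (ℓ : ℤ_[ℓ]) • x) (hγ : ∃ γ, f (ρ γ) ≠ 0) :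
    ∃ N : Subgroup Γ, N.Normal ∧
      Finite (Γ ⧸ N) ∧
      Nat.card (Γ ⧸ N) ≤ (ℓ ^ (Module.finrank ℤ_[ℓ] M) - 1) / (ℓ - 1) ∧
      ∃ C : Set (Γ ⧸ N), C.Nonempty ∧
        (∀ γ δ : Γ, (QuotientGroup.mk γ : Γ ⧸ N) ∈ C →
          (QuotientGroup.mk (δ * γ * δ⁻¹) : Γ ⧸ N) ∈ C) ∧
        (∀ γ : Γ, (QuotientGroup.mk γ : Γ ⧸ N) ∈ C → f (ρ γ) ≠ 0) := by
  set A : Subalgebra ℤ_[ℓ] M := Algebra.adjoin ℤ_[ℓ] (Set.range ρ) with hA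
  have hρA : ∀ γ, ρ γ ∈ A := fun γ => Algebra.subset_adjoin ⟨γ, rfl⟩
  have hspan : Subalgebra.toSubmodule A = Submodule.span ℤ_[ℓ] (Set.range ρ) := by
    rw [hA, Algebra.adjoin_eq_span]
    congr 1
    rw [← MonoidHom.coe_mrange, Submonoid.closure_eq]
  have hinv : ∀ γ, ρ γ * ρ γ⁻¹ = 1 := fun γ => by rw [← map_mul]; simp
  have hinv' : ∀ γ, ρ γ⁻¹ * ρ γ = 1 := fun γ => by rw [← map_mul]; simp
  let N : Subgroup Γ :=
    { carrier := {γ | ∃ c : ℤ_[ℓ]ˣ, ∃ a ∈ A, ρ γ = (c : ℤ_[ℓ]) • (1 : M) + (ℓ : ℤ_[ℓ]) • a}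
      one_mem' := ⟨1, 0, A.zero_mem, by simp⟩
      mul_mem' := by
        rintro x y ⟨c, a, ha, hx⟩ ⟨d, b, hb, hy⟩
        refine ⟨c * d, (c : ℤ_[ℓ]) • b + a * ρ y,
          A.add_mem (A.smul_mem hb _) (A.mul_mem ha (hρA y)), ?_⟩
        rw [map_mul, hx, add_mul, smul_mul_assoc, one_mul, smul_mul_assoc]
        conv_lhs => enter [1]; rw [hy]
        simp only [Units.val_mul]
        module
      inv_mem' := by
        rintro x ⟨c, a, ha, hx⟩
        refine ⟨c⁻¹, -((c⁻¹ : ℤ_[ℓ]ˣ) : ℤ_[ℓ]) • (a * ρ x⁻¹),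
          A.smul_mem (A.mul_mem ha (hρA _)) _, ?_⟩
        have h := hinv x
        rw [hx, add_mul, smul_mul_assoc, one_mul, smul_mul_assoc] at h
        rw [← h, smul_add, smul_smul, Units.inv_mul]
        module }
  have hmem : ∀ γ, γ ∈ N ↔ ∃ c : ℤ_[ℓ]ˣ, ∃ a ∈ A,
      ρ γ = (c : ℤ_[ℓ]) • (1 : M) + (ℓ : ℤ_[ℓ]) • a := fun γ => Iff.rfl
  have hN : N.Normal := by
    refine ⟨fun n hn g => ?_⟩
    obtain ⟨c, a, ha, h⟩ := (hmem n).1 hn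
    refine (hmem _).2 ⟨c, ρ g * a * ρ g⁻¹, A.mul_mem (A.mul_mem (hρA _) ha) (hρA _), ?_⟩
    rw [map_mul, map_mul, h, mul_add, add_mul]
    simp [hinv]
  have hunit : ∀ z : ℤ_[ℓ], ¬ (ℓ : ℤ_[ℓ]) ∣ z → IsUnit z := by
    intro z hz
    by_contra hu
    exact hz ((PadicInt.norm_lt_one_iff_dvd z).1 (PadicInt.not_isUnit_iff.1 hu))
  have hunit' : ∀ (c : ℤ_[ℓ]ˣ) (a : M), (c : ℤ_[ℓ]) • (1 : M) ≠ (ℓ : ℤ_[ℓ]) • a := by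
    intro c a h
    apply h1 (((c⁻¹ : ℤ_[ℓ]ˣ) : ℤ_[ℓ]) • a)
    rw [smul_comm, ← h, smul_smul, Units.inv_mul, one_smul]
  have hnat : ∀ k : ℤ, ¬ (ℓ : ℤ) ∣ k → IsUnit (k : ℤ_[ℓ]) := by
    intro k hk
    apply hunit
    rw [← PadicInt.norm_lt_one_iff_dvd, PadicInt.norm_int_lt_one_iff_dvd]
    exact hk
  -- counting
  obtain ⟨n, hn, φ, hφ⟩ := exists_reduction ℓ (Subalgebra.toSubmodule A)
  let F : (Γ ⧸ N) × Fin (ℓ - 1) → {v : Fin n → ZMod ℓ // v ≠ 0} := fun p =>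
    ⟨φ ⟨((((p.2 : ℕ) + 1 : ℕ) : ℤ) : ℤ_[ℓ]) • ρ p.1.out, A.smul_mem (hρA _) _⟩, by
      intro h0
      obtain ⟨b, hb⟩ := hφ _ h0
      have hb' : ((((p.2 : ℕ) + 1 : ℕ) : ℤ) : ℤ_[ℓ]) • ρ p.1.out = (ℓ : ℤ_[ℓ]) • (b : M) :=
        congrArg Subtype.val hb
      obtain ⟨c, hc⟩ := hnat (((p.2 : ℕ) + 1 : ℕ) : ℤ) (by
        intro h
        have := Nat.le_of_dvd (by omega) (Int.natCast_dvd_natCast.1 h)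
        have := p.2.2
        omega)
      apply hunit' c ((b : M) * ρ p.1.out⁻¹)
      rw [← smul_mul_assoc, ← hb', smul_mul_assoc, hinv, hc]⟩
  have hF : Function.Injective F := by
    rintro ⟨x, i⟩ ⟨y, j⟩ h
    have h2 := congrArg Subtype.val h
    simp only [F] at h2
    rw [← sub_eq_zero, ← map_sub] at h2
    obtain ⟨b, hb⟩ := hφ _ h2
    have hb' : ((((i : ℕ) + 1 : ℕ) : ℤ) : ℤ_[ℓ]) • ρ x.out
        - ((((j : ℕ) + 1 : ℕ) : ℤ) : ℤ_[ℓ]) • ρ y.out = (ℓ : ℤ_[ℓ]) • (b : M) :=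
      congrArg Subtype.val hb
    have hbA : (b : M) ∈ A := b.2
    have hxy : x = y := by
      obtain ⟨c, hc⟩ := hnat (((i : ℕ) + 1 : ℕ) : ℤ) (by
        intro h
        have := Nat.le_of_dvd (by omega) (Int.natCast_dvd_natCast.1 h)
        have := i.2
        omega)
      obtain ⟨d, hd⟩ := hnat (((j : ℕ) + 1 : ℕ) : ℤ) (by
        intro h
        have := Nat.le_of_dvd (by omega) (Int.natCast_dvd_natCast.1 h)
        have := j.2
        omega)
      rw [← hc, ← hd] at hb'
      rw [← QuotientGroup.out_eq' x, ← QuotientGroup.out_eq' y, QuotientGroup.eq]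
      refine (hmem _).2 ⟨d⁻¹ * c, -((d⁻¹ : ℤ_[ℓ]ˣ) : ℤ_[ℓ]) • (ρ x.out⁻¹ * (b : M)),
        A.smul_mem (A.mul_mem (hρA _) hbA) _, ?_⟩
      have h3 : (d : ℤ_[ℓ]) • ρ y.out = (c : ℤ_[ℓ]) • ρ x.out - (ℓ : ℤ_[ℓ]) • (b : M) := by
        rw [← hb']; abel
      have h4 : ρ y.out = ((d⁻¹ : ℤ_[ℓ]ˣ) : ℤ_[ℓ]) •
          ((c : ℤ_[ℓ]) • ρ x.out - (ℓ : ℤ_[ℓ]) • (b : M)) := by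
        rw [← h3, smul_smul, Units.inv_mul, one_smul]
      rw [map_mul, h4, mul_smul_comm, mul_sub, mul_smul_comm, mul_smul_comm, hinv',
        Units.val_mul]
      module
    subst hxy
    have hij : i = j := by
      by_contra hne
      obtain ⟨c, hc⟩ := hnat ((((i : ℕ) + 1 : ℕ) : ℤ) - (((j : ℕ) + 1 : ℕ) : ℤ)) (by
        intro h
        have hi := i.2
        have hj := j.2
        have h5 := Int.eq_zero_of_abs_lt_dvd h (by rw [abs_lt]; constructor <;> omega)
        apply hne
        ext
        omega)
      apply hunit' c ((b : M) * ρ x.out⁻¹)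
      rw [← smul_mul_assoc, ← hb', ← sub_smul, smul_mul_assoc, hinv, hc]
      push_cast
      rfl
    rw [hij]
  have hl2 : 2 ≤ ℓ := hl.out.two_le
  have hfinP : Finite ((Γ ⧸ N) × Fin (ℓ - 1)) := Finite.of_injective F hF
  have : Nonempty (Fin (ℓ - 1)) := ⟨⟨0, by omega⟩⟩
  have hfin : Finite (Γ ⧸ N) := Finite.prod_left (Fin (ℓ - 1))
  have hcard : Nat.card (Γ ⧸ N) ≤ (ℓ ^ (Module.finrank ℤ_[ℓ] M) - 1) / (ℓ - 1) := by
    rw [Nat.le_div_iff_mul_le (by omega)]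
    have h := Nat.card_le_card_of_injective F hF
    rw [Nat.card_prod, Nat.card_fin] at h
    have h6 : Nat.card {v : Fin n → ZMod ℓ // v ≠ 0} = ℓ ^ n - 1 := by
      classical
      rw [Nat.card_eq_fintype_card, Fintype.card_subtype_compl]
      simp [ZMod.card]
    rw [h6] at h
    exact h.trans (Nat.sub_le_sub_right (Nat.pow_le_pow_right (by omega) hn) 1)
  -- the functional
  have hl0 : (ℓ : ℤ_[ℓ]) ≠ 0 := PadicInt.prime_p.ne_zero
  have hex : ∃ k : ℕ, ∃ γ, ¬ (ℓ : ℤ_[ℓ]) ^ (k + 1) ∣ f (ρ γ) := by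
    obtain ⟨γ, hγ⟩ := hγ
    obtain ⟨k, hk⟩ := FiniteMultiplicity.of_not_isUnit PadicInt.prime_p.not_unit hγ
    exact ⟨k, γ, hk⟩
  classical
  obtain ⟨k, ⟨γ₀, hγ₀⟩, hmin⟩ : ∃ k : ℕ, (∃ γ, ¬ (ℓ : ℤ_[ℓ]) ^ (k + 1) ∣ f (ρ γ)) ∧
      ∀ γ, (ℓ : ℤ_[ℓ]) ^ k ∣ f (ρ γ) := by
    refine ⟨Nat.find hex, Nat.find_spec hex, fun γ => ?_⟩
    by_contra hc
    rcases hk : Nat.find hex with _ | m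
    · rw [hk] at hc; simp at hc
    · rw [hk] at hc
      exact Nat.find_min hex (m := m) (by omega) ⟨γ, hc⟩
  have hminA : ∀ a ∈ A, (ℓ : ℤ_[ℓ]) ^ k ∣ f a := by
    intro a ha
    have ha' : a ∈ Submodule.span ℤ_[ℓ] (Set.range ρ) := by rw [← hspan]; exact ha
    induction ha' using Submodule.span_induction with
    | mem x hx => obtain ⟨γ, rfl⟩ := hx; exact hmin γ
    | zero => simp
    | add x y hx hy h1 h2 =>
      rw [map_add]
      exact dvd_add (h1 (by rw [← Subalgebra.mem_toSubmodule, hspan]; exact hx))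
        (h2 (by rw [← Subalgebra.mem_toSubmodule, hspan]; exact hy))
    | smul c x hx h =>
      rw [map_smul, smul_eq_mul]
      exact dvd_mul_of_dvd_right (h (by rw [← Subalgebra.mem_toSubmodule, hspan]; exact hx)) _
  have hinvar : ∀ γ δ : Γ, (QuotientGroup.mk γ : Γ ⧸ N) = QuotientGroup.mk δ →
      (ℓ : ℤ_[ℓ]) ^ (k + 1) ∣ f (ρ δ) → (ℓ : ℤ_[ℓ]) ^ (k + 1) ∣ f (ρ γ) := by
    intro γ δ h hd
    rw [QuotientGroup.eq] at h
    obtain ⟨c, a, ha, hc⟩ := (hmem _).1 h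
    have h7 : ρ δ = (c : ℤ_[ℓ]) • ρ γ + (ℓ : ℤ_[ℓ]) • (ρ γ * a) := by
      have : ρ δ = ρ γ * ρ (γ⁻¹ * δ) := by rw [← map_mul]; simp
      rw [this, hc, mul_add, mul_smul_comm, mul_smul_comm, mul_one]
    rw [h7, map_add, map_smul, map_smul, smul_eq_mul, smul_eq_mul] at hd
    have h8 : (ℓ : ℤ_[ℓ]) ^ (k + 1) ∣ (ℓ : ℤ_[ℓ]) * f (ρ γ * a) := by
      rw [pow_succ']
      exact mul_dvd_mul_left _ (hminA _ (A.mul_mem (hρA _) ha))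
    have h9 := (dvd_add_left h8).1 hd
    exact (Units.dvd_mul_left).1 h9
  refine ⟨N, hN, hfin, hcard,
    {q | ∃ γ, (QuotientGroup.mk γ : Γ ⧸ N) = q ∧ ¬ (ℓ : ℤ_[ℓ]) ^ (k + 1) ∣ f (ρ γ)},
    ⟨_, γ₀, rfl, hγ₀⟩, ?_, ?_⟩
  · rintro γ δ ⟨γ', h, hd⟩
    refine ⟨δ * γ * δ⁻¹, rfl, fun h' => hd (hinvar _ _ h ?_)⟩
    rw [map_mul, hf, ← map_mul] at h'
    simpa [mul_assoc] using h'
  · rintro γ ⟨γ', h, hd⟩ h0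
    exact hd (hinvar _ _ h (by rw [h0]; exact dvd_zero _))

/-- Serre's proposition: if `ρ₁, ρ₂ : Γ → GL_r(ℤ_ℓ)` are group homomorphisms whose traces
differ at some element, then there is a finite quotient `G = Γ/N` of `Γ` of order at most
`(ℓ^(2r²) − 1)/(ℓ − 1)` and a nonempty conjugation-closed subset `C ⊆ G` such that any
`γ ∈ Γ` whose image in `G` lies in `C` satisfies `tr ρ₁(γ) ≠ tr ρ₂(γ)`. -/
theorem stmt_0 (ℓ : ℕ) [Fact ℓ.Prime] (r : ℕ) (hr : 0 < r) (Γ : Type*) [Group Γ]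
    (ρ₁ ρ₂ : Γ →* GL (Fin r) ℤ_[ℓ])
    (hγ : ∃ γ : Γ, Matrix.trace ((ρ₁ γ : GL (Fin r) ℤ_[ℓ]) : Matrix (Fin r) (Fin r) ℤ_[ℓ])
        ≠ Matrix.trace ((ρ₂ γ : GL (Fin r) ℤ_[ℓ]) : Matrix (Fin r) (Fin r) ℤ_[ℓ])) :
    ∃ N : Subgroup Γ, N.Normal ∧
      Finite (Γ ⧸ N) ∧
      Nat.card (Γ ⧸ N) ≤ (ℓ ^ (2 * r ^ 2) - 1) / (ℓ - 1) ∧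
      ∃ C : Set (Γ ⧸ N), C.Nonempty ∧
        (∀ γ δ : Γ, (QuotientGroup.mk γ : Γ ⧸ N) ∈ C →
          (QuotientGroup.mk (δ * γ * δ⁻¹) : Γ ⧸ N) ∈ C) ∧
        (∀ γ : Γ, (QuotientGroup.mk γ : Γ ⧸ N) ∈ C →
          Matrix.trace ((ρ₁ γ : GL (Fin r) ℤ_[ℓ]) : Matrix (Fin r) (Fin r) ℤ_[ℓ])
            ≠ Matrix.trace ((ρ₂ γ : GL (Fin r) ℤ_[ℓ]) : Matrix (Fin r) (Fin r) ℤ_[ℓ])) := by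
  have : Nonempty (Fin r) := ⟨⟨0, hr⟩⟩
  let M := Matrix (Fin r) (Fin r) ℤ_[ℓ]
  let ρ : Γ →* M × M := ((Units.coeHom M).comp ρ₁).prod ((Units.coeHom M).comp ρ₂)
  let t : M →ₗ[ℤ_[ℓ]] ℤ_[ℓ] := Matrix.traceLinearMap (Fin r) ℤ_[ℓ] ℤ_[ℓ]
  let f : M × M →ₗ[ℤ_[ℓ]] ℤ_[ℓ] :=
    t.comp (LinearMap.fst ℤ_[ℓ] M M) - t.comp (LinearMap.snd ℤ_[ℓ] M M)
  have hfρ : ∀ γ, f (ρ γ) = Matrix.trace ((ρ₁ γ : GL (Fin r) ℤ_[ℓ]) : M)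
      - Matrix.trace ((ρ₂ γ : GL (Fin r) ℤ_[ℓ]) : M) := fun γ => rfl
  have hrank : Module.finrank ℤ_[ℓ] (M × M) = 2 * r ^ 2 := by
    rw [Module.finrank_prod, Module.finrank_matrix]
    simp
    ring
  have key := generic_serre ℓ Γ ρ f ?_ ?_ ?_
  · rw [hrank] at key
    simpa only [hfρ, sub_ne_zero] using key
  · intro x y
    change Matrix.trace (x.1 * y.1) - Matrix.trace (x.2 * y.2)
      = Matrix.trace (y.1 * x.1) - Matrix.trace (y.2 * x.2)
    rw [Matrix.trace_mul_comm x.1, Matrix.trace_mul_comm x.2]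
  · intro x h
    have h2 : (1 : M) = (ℓ : ℤ_[ℓ]) • x.1 := congrArg Prod.fst h
    have h3 := congrFun (congrFun h2 ⟨0, hr⟩) ⟨0, hr⟩
    rw [Matrix.one_apply_eq, Matrix.smul_apply, smul_eq_mul] at h3
    exact PadicInt.prime_p.not_unit (IsUnit.of_mul_eq_one _ h3.symm)
  · simpa only [hfρ, sub_ne_zero] using hγ
end

section
/- If K/ℚ is a nontrivial finite Galois extension of number fields, then ((1/2) log 3) · [K:ℚ] ≤ log d_K ≤ ([K:ℚ] − 1) · log rad(d_K) + [K:ℚ] · log([K:ℚ]), where d_K denotes the absolute value of the discriminant of K and rad(n) = ∏_{p ∣ n} p denotes the radical of an integer n (the product of the distinct prime divisors of n). -/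
open NumberField

/-- The radical of a natural number: the product of its distinct prime divisors. -/
def natRadical (n : ℕ) : ℕ := ∏ p ∈ n.primeFactors, p

lemma lower_aux (K : Type*) [Field K] [NumberField K] 
    (hK : 2 ≤ Module.finrank ℚ K) :
    (1 / 2 * Real.log 3) * (Module.finrank ℚ K : ℝ)
        ≤ Real.log ((NumberField.discr K).natAbs : ℝ) := by
  have h1 := abs_discr_ge (K := K) hK
  have h2 := abs_discr_gt_two (K := K) hK
  have hc : (((NumberField.discr K).natAbs : ℕ) : ℝ) = ((|discr K| : ℤ) : ℝ) := by
    rw [Int.abs_eq_natAbs]; simp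
  have h3 : (3:ℝ) ≤ ((NumberField.discr K).natAbs : ℝ) := by
    rw [hc]; exact_mod_cast h2
  rw [← hc] at h1
  set d : ℝ := ((NumberField.discr K).natAbs : ℝ)
  generalize Module.finrank ℚ K = n at *
  have key : (3:ℝ) ^ n ≤ d ^ 2 := by
    rcases hK.eq_or_lt with h | h
    · subst h; nlinarith
    · have hpi := Real.pi_gt_d2
      have h4 : (4 / 9 : ℝ) * (471/200 : ℝ) ^ n ≤ d := by
        refine le_trans ?_ h1
        have : (471/200 : ℝ) ≤ 3 * Real.pi / 4 := by norm_num at hpi ⊢; linarith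
        gcongr
      have h5 : (3:ℝ) ^ n ≤ ((4 / 9 : ℝ) * (471/200 : ℝ) ^ n) ^ 2 := by
        clear h4 h1
        induction n, h using Nat.le_induction with
        | base => norm_num
        | succ m hm ih =>
          have := ih (by omega)
          rw [pow_succ, pow_succ (471/200 : ℝ) m]
          nlinarith [sq_nonneg ((4 / 9 : ℝ) * (471/200 : ℝ) ^ m)]
      exact h5.trans (by gcongr)
  have := Real.log_le_log (by positivity) key
  rw [Real.log_pow, Real.log_pow] at this
  push_cast at this
  linarith

/-- final arithmetic -/
lemma upper_aux (d n : ℕ) (hd : d ≠ 0) (hn : 1 ≤ n)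
    (h : ∀ p, p.Prime → ¬ p ^ (n * (n.factorization p + 1)) ∣ d) :
    Real.log (d : ℝ) ≤ ((n : ℝ) - 1) * Real.log (natRadical d : ℝ) + n * Real.log (n : ℝ) := by
  have hr : natRadical d ≠ 0 := 
    Finset.prod_ne_zero_iff.2 fun p hp => (Nat.prime_of_mem_primeFactors hp).ne_zero
  have hdvd : d ∣ natRadical d ^ (n - 1) * n ^ n := by
    rw [← Nat.factorization_le_iff_dvd hd (by positivity)]
    intro p
    by_cases hp : p ∈ d.primeFactors
    · have hpp := Nat.prime_of_mem_primeFactors hp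
      have h1 := h p hpp
      rw [hpp.pow_dvd_iff_le_factorization hd] at h1
      have h2 : 1 ≤ (natRadical d).factorization p := by
        rw [← hpp.pow_dvd_iff_le_factorization hr, pow_one]
        exact Finset.dvd_prod_of_mem _ hp
      rw [Nat.factorization_mul (by positivity) (by positivity)]
      simp only [Nat.factorization_pow, Finsupp.add_apply, Finsupp.smul_apply, smul_eq_mul]
      have h3 : n - 1 ≤ (n - 1) * (natRadical d).factorization p := Nat.le_mul_of_pos_right _ h2
      have : n * (n.factorization p + 1) = n * n.factorization p + n := by ring
      omega
    · rw [← Nat.support_factorization, Finsupp.notMem_support_iff] at hp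
      simp [hp]
  have hle := Nat.le_of_dvd (by positivity) hdvd
  have hle' : (d : ℝ) ≤ (natRadical d : ℝ) ^ (n - 1) * (n : ℝ) ^ n := by exact_mod_cast hle
  have := Real.log_le_log (by positivity) hle'
  rw [Real.log_mul (by positivity) (by positivity), Real.log_pow, Real.log_pow, Nat.cast_sub hn] at this
  simpa using this

lemma mem_different_iff (K : Type*) [Field K] [NumberField K] (x : 𝓞 K) :
    x ∈ differentIdeal ℤ (𝓞 K) ↔ ∀ y : K, (∀ z : 𝓞 K, ∃ a : ℤ, Algebra.trace ℚ K (y * z) = a) →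
      ∃ w : 𝓞 K, (w : K) = x * y := by
  have h := coeSubmodule_differentIdeal ℤ ℚ (B := 𝓞 K) (L := K)
  have h1 : x ∈ differentIdeal ℤ (𝓞 K) ↔
      (x : K) ∈ IsLocalization.coeSubmodule K (differentIdeal ℤ (𝓞 K)) := by
    rw [IsLocalization.mem_coeSubmodule]
    constructor
    · intro hx; exact ⟨x, hx, rfl⟩
    · rintro ⟨y, hy, h⟩
      rwa [← RingOfIntegers.coe_injective h]
  rw [h1, h, Submodule.mem_div_iff_forall_mul_mem]
  simp only [Submodule.mem_traceDual, Submodule.mem_one, Algebra.traceForm_apply]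
  refine forall_congr' fun y => ?_
  have : (∀ a : K, (∃ z : 𝓞 K, algebraMap (𝓞 K) K z = a) → Algebra.trace ℚ K (y * a) ∈ (algebraMap ℤ ℚ).range) ↔ 
     (∀ z : 𝓞 K, ∃ a : ℤ, Algebra.trace ℚ K (y * z) = a) := by
    constructor
    · intro h z
      obtain ⟨a, ha⟩ := h z ⟨z, rfl⟩
      exact ⟨a, by simpa using ha.symm⟩
    · rintro h _ ⟨z, rfl⟩
      obtain ⟨a, ha⟩ := h z
      exact ⟨a, by simpa using ha.symm⟩
  rw [← this]

lemma different_stable (K : Type*) [Field K] [NumberField K] (σ : K ≃ₐ[ℚ] K) (x : 𝓞 K)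
    (hx : x ∈ differentIdeal ℤ (𝓞 K)) :
    RingOfIntegers.mapRingEquiv σ x ∈ differentIdeal ℤ (𝓞 K) := by
  rw [mem_different_iff] at hx ⊢
  intro y hy
  obtain ⟨w, hw⟩ := hx (σ.symm y) (by
    intro z
    obtain ⟨a, ha⟩ := hy (RingOfIntegers.mapRingEquiv σ z)
    refine ⟨a, ?_⟩
    rw [← ha, ← Algebra.trace_eq_of_algEquiv σ]
    simp)
  refine ⟨RingOfIntegers.mapRingEquiv σ w, ?_⟩
  simp [hw]

lemma map_discr_le (K : Type*) [Field K] [NumberField K] [IsGalois ℚ K] :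
    Ideal.map (algebraMap ℤ (𝓞 K)) (Ideal.relNorm ℤ (differentIdeal ℤ (𝓞 K))) ≤
      differentIdeal ℤ (𝓞 K) ^ Module.finrank ℚ K := by
  rw [Ideal.map_relNorm, Ideal.span_le]
  rintro _ ⟨x, hx, rfl⟩
  have : (algebraMap ℤ (𝓞 K) (Algebra.intNorm ℤ (𝓞 K) x)) =
      ∏ σ : K ≃ₐ[ℚ] K, RingOfIntegers.mapRingEquiv σ x := by
    apply RingOfIntegers.coe_injective
    rw [Algebra.intNorm_eq_norm, map_prod]
    have := Algebra.norm_eq_prod_automorphisms ℚ (x : K)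
    simp only [RingOfIntegers.mapRingEquiv_apply]
    refine Eq.trans ?_ this
    rw [← Algebra.coe_norm_int]
    simp
  rw [Function.comp_apply, this, ← IsGalois.card_aut_eq_finrank, Nat.card_eq_fintype_card,
    ← Finset.card_univ, ← Finset.prod_const]
  exact Ideal.prod_mem_prod fun σ _ => different_stable K σ x hx

lemma pow_dvd (K : Type*) [Field K] [NumberField K] [IsGalois ℚ K] :
    differentIdeal ℤ (𝓞 K) ^ Module.finrank ℚ K =
      Ideal.span {((discr K).natAbs : 𝓞 K)} := by
  have h := map_discr_le K
  rw [Ideal.relNorm_int, absNorm_differentIdeal K, Ideal.map_span, Set.image_singleton] at h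
  simp only [algebraMap_int_eq, eq_intCast, Int.cast_natCast] at h
  rw [← Ideal.dvd_iff_le] at h
  obtain ⟨C, hC⟩ := h
  have h2 := congrArg Ideal.absNorm hC
  have hd : (discr K).natAbs ≠ 0 := by simpa using discr_ne_zero K
  rw [map_mul, map_pow, absNorm_differentIdeal K, Ideal.absNorm_span_natCast,
    RingOfIntegers.rank] at h2
  have h3 : Ideal.absNorm C = 1 := by
    have : (discr K).natAbs ^ Module.finrank ℚ K ≠ 0 := pow_ne_zero _ hd
    exact (Nat.eq_of_mul_eq_mul_left (Nat.pos_of_ne_zero this) (by simpa using h2)).symm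
  rw [Ideal.absNorm_eq_one_iff] at h3
  rw [hC, h3, Ideal.mul_top]

lemma not_pow_dvd (K : Type*) [Field K] [NumberField K] [IsGalois ℚ K] (p : ℕ) (hp : p.Prime) :
    ¬ p ^ (Module.finrank ℚ K * ((Module.finrank ℚ K).factorization p + 1)) ∣
      (discr K).natAbs := by
  intro h
  set n := Module.finrank ℚ K with hn
  have hn0 : n ≠ 0 := Module.finrank_pos.ne'
  set m := n.factorization p + 1 with hm
  have h1 : Ideal.span {((p : 𝓞 K) ^ m)} ^ n ∣ differentIdeal ℤ (𝓞 K) ^ n := by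
    rw [pow_dvd, Ideal.span_singleton_pow, ← pow_mul, mul_comm m, Ideal.dvd_span_singleton,
      Ideal.mem_span_singleton]
    exact_mod_cast Nat.cast_dvd_cast h
  have h2 := (UniqueFactorizationMonoid.pow_dvd_pow_iff_dvd hn0).1 h1
  have hp0 : (p : K) ^ m ≠ 0 := pow_ne_zero _ (by exact_mod_cast hp.ne_zero)
  have hpo : (p : 𝓞 K) ^ m ≠ 0 := pow_ne_zero _ (by exact_mod_cast hp.ne_zero)
  rw [Ideal.dvd_iff_le, differentialIdeal_le_iff (K := ℚ) (L := K) (by simpa using hpo)] at h2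
  have h3 : Algebra.trace ℚ K ((p : K) ^ m)⁻¹ ∈ (1 : Submodule ℤ ℚ) := by
    refine h2 ⟨((p : K) ^ m)⁻¹, ?_, rfl⟩
    simp [FractionalIdeal.coeIdeal_span_singleton, FractionalIdeal.spanSingleton_inv]
  obtain ⟨a, ha⟩ := Submodule.mem_one.1 h3
  have h4 : ((p : K) ^ m)⁻¹ = algebraMap ℚ K (((p : ℚ) ^ m)⁻¹) := by simp
  rw [h4, Algebra.trace_algebraMap, ← hn] at ha
  have hpq : (p : ℚ) ^ m ≠ 0 := pow_ne_zero _ (by exact_mod_cast hp.ne_zero)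
  have h5 : (n : ℤ) = p ^ m * a := by
    have : (n : ℚ) = p ^ m * a := by
      simp only [nsmul_eq_mul, algebraMap_int_eq, eq_intCast] at ha
      rw [ha]; field_simp
    exact_mod_cast this
  have h6 : p ^ m ∣ n := by
    have : ((p ^ m : ℕ) : ℤ) ∣ n := ⟨a, by exact_mod_cast h5⟩
    exact_mod_cast this
  rw [hp.pow_dvd_iff_le_factorization hn0] at h6
  omega

/-- For a nontrivial finite Galois extension `K/ℚ`,
`((1/2) log 3)·[K:ℚ] ≤ log d_K ≤ ([K:ℚ] − 1)·log rad(d_K) + [K:ℚ]·log [K:ℚ]`,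
where `d_K` is the absolute value of the discriminant of `K`. -/
theorem stmt_1 (K : Type*) [Field K] [NumberField K] [IsGalois ℚ K]
    (hK : 2 ≤ Module.finrank ℚ K) :
    (1 / 2 * Real.log 3) * (Module.finrank ℚ K : ℝ)
        ≤ Real.log ((NumberField.discr K).natAbs : ℝ) ∧
    Real.log ((NumberField.discr K).natAbs : ℝ)
        ≤ ((Module.finrank ℚ K : ℝ) - 1) * Real.log (natRadical (NumberField.discr K).natAbs : ℝ)
            + (Module.finrank ℚ K : ℝ) * Real.log (Module.finrank ℚ K : ℝ) := by
  exact ⟨lower_aux K hK, upper_aux _ _ (by simpa using discr_ne_zero K) (by omega) (not_pow_dvd K)⟩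
end

section
/- Let ℓ be an odd prime and let G be a subgroup of GL₂(𝔽_ℓ). Then at least one of the following holds: (1) G contains SL₂(𝔽_ℓ); (2) G is conjugate to a subgroup of the Borel subgroup ℬ(ℓ) of upper triangular matrices; (3) G is conjugate to a subgroup of the non-split Cartan subgroup 𝒞_ns(ℓ); (4) G is conjugate to a subgroup of the normalizer 𝒞_s⁺(ℓ) of the split Cartan subgroup but not to any subgroup of the split Cartan subgroup 𝒞_s(ℓ); (5) G is conjugate to a subgroup of the normalizer 𝒞_ns⁺(ℓ) of the non-split Cartan subgroup but not to any subgroup of 𝒞_ns(ℓ); or (6) the image of G in PGL₂(𝔽_ℓ) is isomorphic as a group to A₄, S₄, or A₅. -/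
open Matrix

/-- The Borel subgroup of `GL₂(𝔽_ℓ)`: the invertible upper-triangular matrices. -/
def borelSubset (ℓ : ℕ) : Set (GL (Fin 2) (ZMod ℓ)) :=
  {g | (g : Matrix (Fin 2) (Fin 2) (ZMod ℓ)) 1 0 = 0}

/-- The split Cartan subgroup of `GL₂(𝔽_ℓ)`: the invertible diagonal matrices. -/
def splitCartan (ℓ : ℕ) : Set (GL (Fin 2) (ZMod ℓ)) :=
  {g | (g : Matrix (Fin 2) (Fin 2) (ZMod ℓ)) 0 1 = 0 ∧
       (g : Matrix (Fin 2) (Fin 2) (ZMod ℓ)) 1 0 = 0}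

/-- The non-split Cartan subgroup of `GL₂(𝔽_ℓ)` attached to a nonsquare `ε`:
the invertible matrices of the form `[[a, εc],[c, a]]`. -/
def nonsplitCartan (ℓ : ℕ) (ε : ZMod ℓ) : Set (GL (Fin 2) (ZMod ℓ)) :=
  {g | (g : Matrix (Fin 2) (Fin 2) (ZMod ℓ)) 1 1 = (g : Matrix (Fin 2) (Fin 2) (ZMod ℓ)) 0 0 ∧
       (g : Matrix (Fin 2) (Fin 2) (ZMod ℓ)) 0 1 = ε * (g : Matrix (Fin 2) (Fin 2) (ZMod ℓ)) 1 0}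

/-- `G` is conjugate (in `GL₂(𝔽_ℓ)`) to a subgroup of the set `S`. -/
def IsConjToSubgroupOf {ℓ : ℕ} (G : Subgroup (GL (Fin 2) (ZMod ℓ)))
    (S : Set (GL (Fin 2) (ZMod ℓ))) : Prop :=
  ∃ g : GL (Fin 2) (ZMod ℓ), ∀ x ∈ G, g * x * g⁻¹ ∈ S

lemma dk_arith (n a b c : ℕ) (hn : 2 ≤ n) (ha : 2 ≤ a) (hb : 2 ≤ b) (hc : 2 ≤ c)
    (h : (1 / a + 1 / b + 1 / c : ℚ) = 1 + 2 / n) :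
    (n = 2 * a ∨ n = 2 * b ∨ n = 2 * c) ∨ n = 12 ∨ n = 24 ∨
      (n = 60 ∧ (a = 2 ∨ a = 3 ∨ a = 5) ∧ (b = 2 ∨ b = 3 ∨ b = 5) ∧ (c = 2 ∨ c = 3 ∨ c = 5) ∧
        a ≠ b ∧ a ≠ c ∧ b ≠ c) := by
  wlog hab : a ≤ b generalizing a b
  · have := this b a hb ha (by rw [← h]; ring) (by omega)
    omega
  wlog hac : a ≤ c generalizing a b c
  · have := this a ha c b hc hb (by rw [← h]; ring) (by omega) (by omega)
    omega
  wlog hbc : b ≤ c generalizing b c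
  · have := this b hb c hc (by rw [← h]; ring) hac hab (by omega)
    omega
  have hn0 : (0 : ℚ) < n := by positivity
  have ha0 : (0 : ℚ) < a := by positivity
  have hb0 : (0 : ℚ) < b := by positivity
  have hc0 : (0 : ℚ) < c := by positivity
  have hpos : (0 : ℚ) < 2 / n := by positivity
  have h1 : (1 / b : ℚ) ≤ 1 / a := one_div_le_one_div_of_le ha0 (by exact_mod_cast hab)
  have h2 : (1 / c : ℚ) ≤ 1 / b := one_div_le_one_div_of_le hb0 (by exact_mod_cast hbc)
  have ha3 : a < 3 := by
    by_contra hh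
    have : (1 / a : ℚ) ≤ 1 / 3 :=
      one_div_le_one_div_of_le (by norm_num) (by exact_mod_cast (not_lt.mp hh))
    linarith
  obtain rfl : a = 2 := by omega
  have hb4 : b < 4 := by
    by_contra hh
    have : (1 / b : ℚ) ≤ 1 / 4 :=
      one_div_le_one_div_of_le (by norm_num) (by exact_mod_cast (not_lt.mp hh))
    push_cast at h
    linarith
  have hb' : b = 2 ∨ b = 3 := by omega
  rcases hb' with rfl | rfl
  · left; right; right
    push_cast at h
    have : (1 / c : ℚ) = 2 / n := by linarith
    field_simp at this
    exact_mod_cast (by linarith : (n : ℚ) = 2 * c)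
  · have hc6 : c < 6 := by
      by_contra hh
      have : (1 / c : ℚ) ≤ 1 / 6 :=
        one_div_le_one_div_of_le (by norm_num) (by exact_mod_cast (not_lt.mp hh))
      push_cast at h
      linarith
    interval_cases c
    · right; left
      have : (2 / n : ℚ) = 1 / 6 := by push_cast at h; linarith
      field_simp at this
      exact_mod_cast (by linarith : (n : ℚ) = 12)
    · right; right; left
      have : (2 / n : ℚ) = 1 / 12 := by push_cast at h; linarith
      field_simp at this
      exact_mod_cast (by linarith : (n : ℚ) = 24)
    · right; right; right
      have : (2 / n : ℚ) = 1 / 30 := by push_cast at h; linarith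
      field_simp at this
      refine ⟨?_, by simp⟩
      exact_mod_cast (by linarith : (n : ℚ) = 60)

lemma dk_arith2 (n a b : ℕ) (hn : 2 ≤ n) (ha : 1 ≤ a) (hb : 1 ≤ b) (han : a ≤ n) (hbn : b ≤ n)
    (h : (1 / a + 1 / b : ℚ) = 2 / n) : a = n ∧ b = n := by
  have hn0 : (0 : ℚ) < n := by positivity
  have ha0 : (0 : ℚ) < a := by positivity
  have hb0 : (0 : ℚ) < b := by positivity
  have h1 : (1 / n : ℚ) ≤ 1 / a := one_div_le_one_div_of_le ha0 (by exact_mod_cast han)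
  have h2 : (1 / n : ℚ) ≤ 1 / b := one_div_le_one_div_of_le hb0 (by exact_mod_cast hbn)
  have e : (2 / n : ℚ) = 1 / n + 1 / n := by ring
  have h3 : (1 / a : ℚ) = 1 / n := by linarith
  have h4 : (1 / b : ℚ) = 1 / n := by linarith
  field_simp at h3 h4
  exact ⟨by exact_mod_cast h3.symm, by exact_mod_cast h4.symm⟩

lemma dk_count {Ω : Type*} [Fintype Ω] [DecidableEq Ω] (n : ℕ) (hn : 2 ≤ n) (e : Ω → ℕ)
    (he : ∀ ω, 1 ≤ e ω) (hen : ∀ ω, e ω ≤ n)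
    (hs : ∑ ω, (1 - 1 / (e ω : ℚ)) = 2 - 2 / n) :
    (∃ a b, a ≠ b ∧ e a = n ∧ e b = n) ∨ (∃ a, 2 ≤ e a ∧ n = 2 * e a) ∨ n = 12 ∨ n = 24 ∨
      (n = 60 ∧ (∀ ω, e ω = 1 ∨ e ω = 2 ∨ e ω = 3 ∨ e ω = 5) ∧
        ∀ ω ω', e ω = 2 → e ω' = 2 → ω = ω') := by
  classical
  set S : Finset Ω := Finset.univ.filter (fun ω => e ω ≠ 1) with hS
  have hn0 : (0 : ℚ) < n := by positivity
  have hmem : ∀ ω, ω ∉ S → e ω = 1 := by intro ω; simp [hS]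
  have hge : ∀ ω ∈ S, 2 ≤ e ω := by
    intro ω h
    have := he ω
    have h' : e ω ≠ 1 := by simpa [hS] using h
    omega
  have hs' : ∑ ω ∈ S, (1 - 1 / (e ω : ℚ)) = 2 - 2 / n := by
    rw [← hs]
    apply Finset.sum_subset (Finset.subset_univ _)
    intro ω _ h
    simp [hmem ω h]
  have hlo : (S.card : ℚ) * (1 / 2) ≤ 2 - 2 / n := by
    rw [← hs', ← nsmul_eq_mul]
    apply Finset.card_nsmul_le_sum
    intro ω h
    have : (1 / (e ω : ℚ)) ≤ 1 / 2 :=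
      one_div_le_one_div_of_le (by norm_num) (by exact_mod_cast hge ω h)
    linarith
  have hup : 2 - 2 / n ≤ (S.card : ℚ) * (1 - 1 / n) := by
    rw [← hs', ← nsmul_eq_mul]
    apply Finset.sum_le_card_nsmul
    intro ω h
    have h0 : (0 : ℚ) < e ω := by exact_mod_cast he ω
    have : (1 / (n : ℚ)) ≤ 1 / e ω :=
      one_div_le_one_div_of_le h0 (by exact_mod_cast hen ω)
    linarith
  have hpos : (0 : ℚ) < 2 / n := by positivity
  have h4 : S.card < 4 := by
    have : (S.card : ℚ) < 4 := by linarith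
    exact_mod_cast this
  have h2 : 2 ≤ S.card := by
    have hn2 : (1 / n : ℚ) ≤ 1 / 2 :=
      one_div_le_one_div_of_le (by norm_num) (by exact_mod_cast hn)
    have e2 : (2 / n : ℚ) = 2 * (1 / n) := by ring
    rw [e2] at hup
    by_contra hh
    have : (S.card : ℚ) ≤ 1 := by exact_mod_cast (by omega : S.card ≤ 1)
    nlinarith
  have h23 : S.card = 2 ∨ S.card = 3 := by omega
  rcases h23 with h | h
  · obtain ⟨a, b, hab, hSab⟩ := Finset.card_eq_two.mp h
    rw [hSab, Finset.sum_pair hab] at hs'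
    left
    obtain ⟨h1, h2⟩ := dk_arith2 n (e a) (e b) hn (he a) (he b) (hen a) (hen b) (by linarith)
    exact ⟨a, b, hab, h1, h2⟩
  · obtain ⟨a, b, c, hab, hac, hbc, hSabc⟩ := Finset.card_eq_three.mp h
    have ha : 2 ≤ e a := hge a (by simp [hSabc])
    have hb : 2 ≤ e b := hge b (by simp [hSabc])
    have hc : 2 ≤ e c := hge c (by simp [hSabc])
    rw [hSabc, Finset.sum_insert (by simp [hab, hac]), Finset.sum_pair hbc] at hs'
    rcases dk_arith n (e a) (e b) (e c) hn ha hb hc (by linarith) with h | h | h | ⟨h, ha', hb', hc', hab', hac', hbc'⟩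
    · right; left
      rcases h with h | h | h
      · exact ⟨a, ha, h⟩
      · exact ⟨b, hb, h⟩
      · exact ⟨c, hc, h⟩
    · right; right; left; exact h
    · right; right; right; left; exact h
    · right; right; right; right
      have hm2 : ∀ ω, e ω = 2 → ω = a ∨ ω = b ∨ ω = c := by
        intro ω h2
        by_contra hne
        have : e ω = 1 := hmem ω (by rw [hSabc]; simpa using hne)
        omega
      refine ⟨h, fun ω => ?_, fun ω ω' h1 h2 => ?_⟩
      swap
      · rcases hm2 ω h1 with rfl | rfl | rfl <;> rcases hm2 ω' h2 with rfl | rfl | rfl <;>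
          first | rfl | (exfalso; omega)
      by_cases hω : ω ∈ S
      · rw [hSabc] at hω
        simp only [Finset.mem_insert, Finset.mem_singleton] at hω
        rcases hω with rfl | rfl | rfl
        · exact Or.inr ha'
        · exact Or.inr hb'
        · exact Or.inr hc'
      · left; exact hmem ω hω

section
variable {H : Type*} [Group H]

lemma dk_emb_alt [Finite H] {α : Type*} [Finite α] (m : ℕ) (f : H →* Equiv.Perm α)
    (hf : Function.Injective f)
    (hα : Nat.card α = m) (hH : 2 * Nat.card H = m.factorial) :
    Nonempty (H ≃* alternatingGroup (Fin m)) := by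
  let e : α ≃ Fin m := Finite.equivFinOfCardEq hα
  let F : H →* Equiv.Perm (Fin m) := (e.permCongrHom.toMonoidHom).comp f
  have hF : Function.Injective F := e.permCongrHom.injective.comp hf
  have hr : Nat.card F.range = Nat.card H :=
    (Nat.card_congr (MonoidHom.ofInjective hF).toEquiv).symm
  have hi : F.range.index = 2 := by
    have h1 := F.range.index_mul_card
    have h2 : Nat.card (Equiv.Perm (Fin m)) = m.factorial := by
      simp [Nat.card_eq_fintype_card, Fintype.card_perm]
    rw [hr, h2, ← hH] at h1
    exact Nat.eq_of_mul_eq_mul_right Nat.card_pos h1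
  have := Equiv.Perm.eq_alternatingGroup_of_index_eq_two hi
  exact ⟨(MonoidHom.ofInjective hF).trans (MulEquiv.subgroupCongr this)⟩

lemma dk_emb_perm [Finite H] {α : Type*} [Finite α] (m : ℕ) (f : H →* Equiv.Perm α)
    (hf : Function.Injective f)
    (hα : Nat.card α = m) (hH : Nat.card H = m.factorial) :
    Nonempty (H ≃* Equiv.Perm (Fin m)) := by
  let e : α ≃ Fin m := Finite.equivFinOfCardEq hα
  let F : H →* Equiv.Perm (Fin m) := (e.permCongrHom.toMonoidHom).comp f
  have hF : Function.Injective F := e.permCongrHom.injective.comp hf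
  have h2 : Nat.card (Equiv.Perm (Fin m)) = m.factorial := by
    simp [Nat.card_eq_fintype_card, Fintype.card_perm]
  exact ⟨MulEquiv.ofBijective F ((Nat.bijective_iff_injective_and_card F).2 ⟨hF, by rw [hH, h2]⟩)⟩

/-- There is a nontrivial element whose fixed-point set is stable under the whole group. -/
def DkStab (H X : Type*) [Group H] [MulAction H X] : Prop :=
  ∃ h : H, h ≠ 1 ∧ ∀ (g : H) (x : X), h • x = x → h • (g • x) = g • x

lemma dk_stab_of_normal {X : Type*} [MulAction H X] (N : Subgroup H) [N.Normal]
    (hN : (Nat.card N).Prime) : DkStab H X := by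
  have : Fact (Nat.card N).Prime := ⟨hN⟩
  have : N ≠ ⊥ := by
    rintro rfl
    simp [Nat.not_prime_one] at hN
  obtain ⟨h, hhN, hh1⟩ := N.bot_or_exists_ne_one.resolve_left this
  refine ⟨h, hh1, fun g x hx => ?_⟩
  have hc : g⁻¹ * h * g ∈ N := by
    simpa using (inferInstance : N.Normal).conj_mem h hhN g⁻¹
  have hz : (⟨g⁻¹ * h * g, hc⟩ : N) ∈ Subgroup.zpowers (⟨h, hhN⟩ : N) :=
    mem_zpowers_of_prime_card rfl (by simpa using hh1)
  obtain ⟨k, hk⟩ := Subgroup.mem_zpowers_iff.1 hz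
  have hk' : h ^ k = g⁻¹ * h * g := by simpa using congrArg Subtype.val hk
  have hx' : h ^ k • x = x := by
    have : h ∈ MulAction.stabilizer H x := hx
    exact (MulAction.stabilizer H x).zpow_mem this k
  have : h * g = g * h ^ k := by rw [hk']; group
  rw [← mul_smul, this, mul_smul, hx']
end

section
variable {H : Type*} [Group H]

lemma dk_sylow_card [Finite H] (p k n : ℕ) [hp : Fact p.Prime] (hH : Nat.card H = n)
    (h1 : p ^ k ∣ n) (h2 : ¬ p ^ (k + 1) ∣ n) (P : Sylow p H) : Nat.card P = p ^ k := by
  obtain ⟨j, hj⟩ := IsPGroup.iff_card.mp P.isPGroup'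
  have h3 : p ^ k ∣ Nat.card P := P.pow_dvd_card_of_pow_dvd_card (by rwa [hH])
  have h4 : Nat.card P ∣ n := by rw [← hH]; exact P.1.card_subgroup_dvd_card
  rw [hj] at h3 h4
  have h5 : k ≤ j := (Nat.pow_dvd_pow_iff_le_right hp.1.one_lt).1 h3
  have h6 : ¬ k + 1 ≤ j := fun h => h2 ((pow_dvd_pow p h).trans h4)
  have : (j : ℕ) = k := by omega
  rw [hj, this]

lemma dk_ker_mem [Finite H] (p : ℕ) [hp : Fact p.Prime] (x : H) (hx : orderOf x = p)
    (hK : x ∈ (MulAction.toPermHom H (Sylow p H)).ker) (Q : Sylow p H) : x ∈ Q := by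
  have h1 : IsPGroup p (Subgroup.zpowers x) :=
    IsPGroup.of_card (n := 1) (by rw [Nat.card_zpowers, hx, pow_one])
  have h2 : x • Q = Q := by
    have := MonoidHom.mem_ker.1 hK
    have := congrArg (fun f => f Q) this
    simpa using this
  have h3 : x ∈ Subgroup.normalizer (Q : Set H) := Sylow.smul_eq_iff_mem_normalizer.1 h2
  have h4 := h1.inf_normalizer_sylow Q
  have h5 : x ∈ Subgroup.zpowers x ⊓ Subgroup.normalizer (Q : Set H) :=
    ⟨Subgroup.mem_zpowers x, h3⟩
  rw [h4] at h5
  exact h5.2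

lemma dk_ker_le (p : ℕ) [hp : Fact p.Prime] (P : Sylow p H) :
    (MulAction.toPermHom H (Sylow p H)).ker ≤ Subgroup.normalizer (P : Set H) := by
  intro x hx
  rw [← Sylow.smul_eq_iff_mem_normalizer]
  have := congrArg (fun f => f P) (MonoidHom.mem_ker.1 hx)
  simpa using this

lemma dk_12_24 [Finite H] (X : Type*) [MulAction H X] (hn : Nat.card H = 12 ∨ Nat.card H = 24) :
    DkStab H X ∨ Nonempty (H ≃* alternatingGroup (Fin 4)) ∨ Nonempty (H ≃* Equiv.Perm (Fin 4)) := by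
  have : Fact (Nat.Prime 3) := ⟨Nat.prime_three⟩
  let P : Sylow 3 H := default
  have hPc : ∀ Q : Sylow 3 H, Nat.card Q = 3 := by
    intro Q
    rcases hn with h | h
    · exact dk_sylow_card 3 1 _ h (by norm_num) (by norm_num) Q
    · exact dk_sylow_card 3 1 _ h (by norm_num) (by norm_num) Q
  have hmod := card_sylow_modEq_one 3 H
  have hdvd := P.card_dvd_index
  have hidx := P.1.index_mul_card
  have hPP : Nat.card (P : Subgroup H) = 3 := hPc P
  rw [hPP] at hidx
  set s := Nat.card (Sylow 3 H) with hs
  have hs14 : s = 1 ∨ s = 4 := by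
    have hi : P.1.index = 4 ∨ P.1.index = 8 := by omega
    have hle : s ≤ 8 := by
      rcases hi with hi | hi <;> rw [hi] at hdvd <;>
        have := Nat.le_of_dvd (by norm_num) hdvd <;> omega
    unfold Nat.ModEq at hmod
    have h7 : s ≠ 7 := by
      intro h7
      rcases hi with hi | hi <;> rw [hi, h7] at hdvd <;> revert hdvd <;> decide
    omega
  rcases hs14 with hs1 | hs4
  · left
    have : Subsingleton (Sylow 3 H) := (Nat.card_eq_one_iff_unique.1 (hs ▸ hs1)).1
    have hN := P.normal_of_subsingleton
    exact dk_stab_of_normal P.1 (by rw [hPP]; norm_num)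
  · set K := (MulAction.toPermHom H (Sylow 3 H)).ker with hK
    have hNi := P.card_eq_index_normalizer
    have hNc := (Subgroup.normalizer (P : Set H)).index_mul_card
    rw [← hNi, ← hs, hs4] at hNc
    have hKN := Subgroup.card_dvd_of_le (dk_ker_le 3 P)
    rw [← hK] at hKN
    have h3 : ¬ 3 ∣ Nat.card K := by
      intro h3
      obtain ⟨x, hx⟩ := exists_prime_orderOf_dvd_card' (G := K) 3 h3
      have hx' : orderOf (x : H) = 3 := by rw [← hx]; exact Subgroup.orderOf_coe x
      have hall : ∀ Q : Sylow 3 H, (Q : Subgroup H) = Subgroup.zpowers (x : H) := by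
        intro Q
        have hm := dk_ker_mem 3 (x : H) hx' x.2 Q
        symm
        apply Subgroup.eq_of_le_of_card_ge
        · rw [Subgroup.zpowers_le]; exact hm
        · rw [Nat.card_zpowers, hx']; exact (hPc Q).le
      have : Subsingleton (Sylow 3 H) := ⟨fun Q R => Sylow.ext ((hall Q).trans (hall R).symm)⟩
      have := Finite.card_le_one_iff_subsingleton (α := Sylow 3 H) |>.2 this
      omega
    have hK12 : Nat.card K = 1 ∨ Nat.card K = 2 := by
      have h6 : Nat.card K ∣ 6 := by
        rcases hn with h | h
        · have : Nat.card (Subgroup.normalizer (P : Set H)) = 3 := by omega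
          rw [this] at hKN
          exact hKN.trans (by norm_num)
        · have : Nat.card (Subgroup.normalizer (P : Set H)) = 6 := by omega
          rwa [this] at hKN
      have hle := Nat.le_of_dvd (by norm_num) h6
      generalize Nat.card K = k at *
      interval_cases k <;> revert h3 h6 <;> decide
    rcases hK12 with h1 | h2
    · have hinj : Function.Injective (MulAction.toPermHom H (Sylow 3 H)) :=
        (MonoidHom.ker_eq_bot_iff _).1 (Subgroup.card_eq_one.1 h1)
      right
      rcases hn with h | h
      · left
        exact dk_emb_alt 4 _ hinj (hs ▸ hs4) (by rw [h]; rfl)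
      · right
        exact dk_emb_perm 4 _ hinj (hs ▸ hs4) (by rw [h]; rfl)
    · left
      exact dk_stab_of_normal K (by rw [h2]; norm_num)
end

section
variable {H : Type*} [Group H]

lemma dk_two_unique (S : Subgroup H) (hS : Nat.card S = 2) (x y : H) (hx : x ∈ S) (hy : y ∈ S)
    (hx1 : x ≠ 1) (hy1 : y ≠ 1) : x = y := by
  obtain ⟨z, _, hz⟩ := (Nat.card_eq_two_iff' (1 : S)).1 hS
  have h1 := hz ⟨x, hx⟩ (by simpa using hx1)
  have h2 := hz ⟨y, hy⟩ (by simpa using hy1)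
  simpa using h1.trans h2.symm

lemma dk_cent_card [Finite H] {X : Type*} [MulAction H X] [Finite X] (t : H) (p : X)
    (hf : (MulAction.fixedBy X t).ncard = 2) (htp : t • p = p)
    (hst : Nat.card (MulAction.stabilizer H p) = 2) :
    Nat.card (Subgroup.centralizer {t}) ≤ 4 := by
  set C := Subgroup.centralizer {t} with hC
  have h1 : Nat.card (MulAction.orbit C p) * Nat.card (MulAction.stabilizer C p) = Nat.card C := by
    rw [← Nat.card_prod]
    exact Nat.card_congr (MulAction.orbitProdStabilizerEquivGroup C p)
  have h2 : Nat.card (MulAction.orbit C p) ≤ 2 := by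
    rw [← hf, Nat.card_coe_set_eq]
    apply Set.ncard_le_ncard _ (Set.toFinite _)
    rintro _ ⟨c, rfl⟩
    have hc : t * c = c * t := by
      have := Subgroup.mem_centralizer_singleton_iff.1 c.2
      first | exact this | exact this.symm
    change t • ((c : H) • p) = (c : H) • p
    rw [← mul_smul, hc, mul_smul, htp]
  have h3 : Nat.card (MulAction.stabilizer C p) ≤ 2 := by
    rw [← hst]
    let f : MulAction.stabilizer C p → MulAction.stabilizer H p := fun c => ⟨c.1.1, c.2⟩
    apply Nat.card_le_card_of_injective f
    intro a b hab
    have := congrArg Subtype.val hab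
    exact Subtype.ext (Subtype.ext this)
  calc _ = _ := h1.symm
    _ ≤ 2 * 2 := Nat.mul_le_mul h2 h3

lemma dk_60 [Finite H] (X : Type*) [MulAction H X] [Finite X] (hn : Nat.card H = 60)
    (hf : ∀ h : H, h ≠ 1 → (MulAction.fixedBy X h).ncard = 2)
    (hst : ∀ x : X, Nat.card (MulAction.stabilizer H x) = 1 ∨
      Nat.card (MulAction.stabilizer H x) = 2 ∨ Nat.card (MulAction.stabilizer H x) = 3 ∨
      Nat.card (MulAction.stabilizer H x) = 5)
    (hconj : ∀ x y : X, Nat.card (MulAction.stabilizer H x) = 2 →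
      Nat.card (MulAction.stabilizer H y) = 2 → ∃ g : H, g • x = y) :
    DkStab H X ∨ Nonempty (H ≃* alternatingGroup (Fin 5)) := by
  classical
  have : Fact (Nat.Prime 2) := ⟨Nat.prime_two⟩
  have : Fintype H := Fintype.ofFinite H
  have hPc : ∀ Q : Sylow 2 H, Nat.card Q = 4 := fun Q =>
    dk_sylow_card 2 2 _ hn (by norm_num) (by norm_num) Q
  have hpt : ∀ t : H, t ≠ 1 → 2 ∣ orderOf t →
      ∃ p : X, t • p = p ∧ Nat.card (MulAction.stabilizer H p) = 2 := by
    intro t ht h2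
    have hne : (MulAction.fixedBy X t).Nonempty := by
      rw [← Set.ncard_pos (Set.toFinite _), hf t ht]; norm_num
    obtain ⟨p, hp⟩ := hne
    refine ⟨p, hp, ?_⟩
    have hm : t ∈ MulAction.stabilizer H p := hp
    have hd : 2 ∣ Nat.card (MulAction.stabilizer H p) :=
      h2.trans (Subgroup.orderOf_dvd_natCard _ hm)
    rcases hst p with h | h | h | h
    · rw [h] at hd; omega
    · exact h
    · rw [h] at hd; omega
    · rw [h] at hd; omega
  have hcent : ∀ t : H, orderOf t = 2 → Nat.card (Subgroup.centralizer {t}) ≤ 4 := by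
    intro t ht
    have ht1 : t ≠ 1 := by rintro rfl; simp at ht
    obtain ⟨p, hp, hp2⟩ := hpt t ht1 (by rw [ht])
    exact dk_cent_card t p (hf t ht1) hp hp2
  have hord : ∀ (Q : Sylow 2 H), ∀ x ∈ Q, x ≠ 1 → orderOf x = 2 := by
    intro Q x hx hx1
    have h4 : orderOf x ∣ 2 ^ 2 := by
      have := Subgroup.orderOf_dvd_natCard (Q : Subgroup H) hx
      rwa [show Nat.card (Q : Subgroup H) = 2 ^ 2 from hPc Q] at this
    have h1 : orderOf x ≠ 1 := by simpa using hx1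
    have h2 : 2 ∣ orderOf x := by
      obtain ⟨j, _, hj⟩ := (Nat.dvd_prime_pow Nat.prime_two).1 h4
      rcases j with _ | j
      · simp [hj] at h1
      · rw [hj]; exact dvd_pow_self 2 (by omega)
    obtain ⟨p, hp, hp2⟩ := hpt x hx1 h2
    have hd := Subgroup.orderOf_dvd_natCard (MulAction.stabilizer H p) (x := x) hp
    rw [hp2] at hd
    exact Nat.dvd_antisymm hd h2
  have hsq : ∀ (Q : Sylow 2 H), ∀ x ∈ Q, x * x = 1 := by
    intro Q x hx
    by_cases h : x = 1
    · simp [h]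
    · rw [← pow_two, ← hord Q x hx h, pow_orderOf_eq_one]
  have hQC : ∀ (Q : Sylow 2 H), ∀ x ∈ Q, x ≠ 1 → (Q : Subgroup H) = Subgroup.centralizer {x} := by
    intro Q x hx hx1
    apply Subgroup.eq_of_le_of_card_ge
    · intro y hy
      rw [Subgroup.mem_centralizer_singleton_iff]
      have h1 := hsq Q (y * x) (Q.mul_mem hy hx)
      have h2 := hsq Q x hx
      have h3 := hsq Q y hy
      have h2' : x⁻¹ = x := inv_eq_of_mul_eq_one_left h2
      have h3' : y⁻¹ = y := inv_eq_of_mul_eq_one_left h3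
      have h1' := inv_eq_of_mul_eq_one_left h1
      rw [_root_.mul_inv_rev, h2', h3'] at h1'
      first | exact h1' | exact h1'.symm
    · exact (hcent x (hord Q x hx hx1)).trans (hPc Q).ge
  have hcj : ∀ t u : H, orderOf t = 2 → orderOf u = 2 → ∃ g : H, g * t * g⁻¹ = u := by
    intro t u ht hu
    have ht1 : t ≠ 1 := by rintro rfl; simp at ht
    have hu1 : u ≠ 1 := by rintro rfl; simp at hu
    obtain ⟨p, hp, hp2⟩ := hpt t ht1 (by rw [ht])
    obtain ⟨q, hq, hq2⟩ := hpt u hu1 (by rw [hu])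
    obtain ⟨g, rfl⟩ := hconj p q hp2 hq2
    refine ⟨g, dk_two_unique _ hq2 _ _ ?_ hq ?_ hu1⟩
    · change (g * t * g⁻¹) • g • p = g • p
      rw [← mul_smul, inv_mul_cancel_right, mul_smul, hp]
    · simpa using ht1
  let P : Sylow 2 H := default
  have hPP : Nat.card (P : Subgroup H) = 4 := hPc P
  set N := Subgroup.normalizer (P : Set H) with hN
  -- two distinct involutions in `P`
  obtain ⟨t, htP, ht1⟩ : ∃ t ∈ P, t ≠ 1 :=
    P.1.bot_or_exists_ne_one.resolve_left (by intro h; rw [h] at hPP; simp at hPP)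
  obtain ⟨u, huP, hu1, hut⟩ : ∃ u ∈ P, u ≠ 1 ∧ u ≠ t := by
    by_contra hcon
    push Not at hcon
    have hsub : ((P : Subgroup H) : Set H) ⊆ {1, t} := by
      intro u hu
      by_cases h : u = 1
      · simp [h]
      · simp [hcon u hu h]
    have h1 := Set.ncard_le_ncard hsub (Set.toFinite _)
    have h2 : ({1, t} : Set H).ncard ≤ 2 := (Set.ncard_insert_le _ _).trans (by simp)
    have h3 : ((P : Subgroup H) : Set H).ncard = 4 := by rw [← hPP]; rfl
    omega
  have htC := hQC P t htP ht1
  have huC := hQC P u huP hu1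
  obtain ⟨g, hg⟩ := hcj t u (hord P t htP ht1) (hord P u huP hu1)
  have hgN : g ∈ N := by
    rw [hN, Subgroup.mem_set_normalizer_iff]
    intro x
    have e1 : x ∈ P ↔ x * t = t * x := by
      change x ∈ (P : Subgroup H) ↔ _
      rw [htC, Subgroup.mem_centralizer_singleton_iff]
      try exact eq_comm
    have e2 : g * x * g⁻¹ ∈ P ↔ (g * x * g⁻¹) * u = u * (g * x * g⁻¹) := by
      change _ ∈ (P : Subgroup H) ↔ _
      rw [huC, Subgroup.mem_centralizer_singleton_iff]
      try exact eq_comm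
    change x ∈ P ↔ g * x * g⁻¹ ∈ P
    rw [e1, e2, ← hg]
    constructor
    · intro h
      calc g * x * g⁻¹ * (g * t * g⁻¹) = g * (x * t) * g⁻¹ := by group
        _ = g * (t * x) * g⁻¹ := by rw [h]
        _ = _ := by group
    · intro h
      calc x * t = g⁻¹ * (g * x * g⁻¹ * (g * t * g⁻¹)) * g := by group
        _ = g⁻¹ * (g * t * g⁻¹ * (g * x * g⁻¹)) * g := by rw [h]
        _ = _ := by group
  have hgP : g ∉ P := by
    intro h
    change g ∈ (P : Subgroup H) at h
    rw [htC, Subgroup.mem_centralizer_singleton_iff] at h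
    apply hut
    rw [← hg]
    first | rw [h, mul_inv_cancel_right] | rw [← h, mul_inv_cancel_right]
  have hPN : (P : Subgroup H) ≤ N := Subgroup.le_normalizer
  have hdvdN := Subgroup.card_dvd_of_le hPN
  rw [hPP] at hdvdN
  have hNi := P.card_eq_index_normalizer
  have hNc := N.index_mul_card
  rw [← hN] at hNi
  rw [← hNi, hn] at hNc
  have hN4 : Nat.card N ≠ 4 := by
    intro h
    have : (P : Subgroup H) = N := Subgroup.eq_of_le_of_card_ge hPN (by rw [h, hPP])
    have h2 : g ∈ (P : Subgroup H) := by rw [this]; exact hgN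
    exact hgP h2
  have hN12 : Nat.card N ≤ 12 := by
    let s : Finset H := Finset.univ.filter (· ∈ N)
    have hs : s.card = Nat.card N := by
      rw [Nat.card_eq_fintype_card, Fintype.card_subtype]
    let f : H → H := fun g => g * t * g⁻¹
    have him : (s.image f).card ≤ 3 := by
      have hsub : s.image f ⊆ (Finset.univ.filter (· ∈ P)).erase 1 := by
        intro y hy
        obtain ⟨x, hx, rfl⟩ := Finset.mem_image.1 hy
        have hxN : x ∈ N := by simpa [s] using hx
        rw [hN, Subgroup.mem_set_normalizer_iff] at hxN
        rw [Finset.mem_erase, Finset.mem_filter]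
        refine ⟨by simpa [f] using ht1, Finset.mem_univ _, (hxN t).1 htP⟩
      have h1 := Finset.card_le_card hsub
      have h2 : (Finset.univ.filter (· ∈ P)).card = 4 := by
        rw [← hPc P, Nat.card_eq_fintype_card, Fintype.card_subtype]
        rfl
      rw [Finset.card_erase_of_mem (by simp [P.one_mem]), h2] at h1
      exact h1
    have hfib : ∀ b ∈ s.image f, (s.filter (fun a => f a = b)).card ≤ 4 := by
      intro b hb
      obtain ⟨x, hx, rfl⟩ := Finset.mem_image.1 hb
      refine le_trans ?_ (hcent t (hord P t htP ht1))
      rw [Nat.card_eq_fintype_card, Fintype.card_subtype]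
      apply Finset.card_le_card_of_injOn (fun a => x⁻¹ * a)
      · intro a ha
        have ha' : a * t * a⁻¹ = x * t * x⁻¹ := (Finset.mem_filter.1 ha).2
        have : x⁻¹ * a ∈ Subgroup.centralizer {t} := by
          rw [Subgroup.mem_centralizer_singleton_iff]
          have : x⁻¹ * a * t = t * (x⁻¹ * a) := by
            calc x⁻¹ * a * t = x⁻¹ * (a * t * a⁻¹) * a := by group
              _ = x⁻¹ * (x * t * x⁻¹) * a := by rw [ha']
              _ = _ := by group
          first | exact this | exact this.symm
        simpa using this
      · intro a _ b _ h
        simpa using h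
    have := Finset.card_le_mul_card_image s 4 hfib
    omega
  have hs5 : Nat.card (Sylow 2 H) = 5 ∧ Nat.card N = 12 := by
    generalize Nat.card N = k at *
    have hk : k = 8 ∨ k = 12 ∨ k = 0 := by omega
    rcases hk with rfl | rfl | rfl <;> omega
  obtain ⟨hs5, hNc12⟩ := hs5
  set K := (MulAction.toPermHom H (Sylow 2 H)).ker with hK
  have hKN := Subgroup.card_dvd_of_le (dk_ker_le 2 P)
  rw [← hK, ← hN, hNc12] at hKN
  have h2 : ¬ 2 ∣ Nat.card K := by
    intro h2
    obtain ⟨x, hx⟩ := exists_prime_orderOf_dvd_card' (G := K) 2 h2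
    have hx' : orderOf (x : H) = 2 := by rw [← hx]; exact Subgroup.orderOf_coe x
    have hx1 : (x : H) ≠ 1 := by intro h; rw [h] at hx'; simp at hx'
    have hall : ∀ Q : Sylow 2 H, (Q : Subgroup H) = Subgroup.centralizer {(x : H)} := by
      intro Q
      exact hQC Q x (dk_ker_mem 2 (x : H) hx' x.2 Q) hx1
    have : Subsingleton (Sylow 2 H) := ⟨fun Q R => Sylow.ext ((hall Q).trans (hall R).symm)⟩
    have := Finite.card_le_one_iff_subsingleton (α := Sylow 2 H) |>.2 this
    omega
  have hK13 : Nat.card K = 1 ∨ Nat.card K = 3 := by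
    have hle := Nat.le_of_dvd (by norm_num) hKN
    generalize Nat.card K = k at *
    interval_cases k <;> revert h2 hKN <;> decide
  rcases hK13 with h1 | h3
  · have hinj : Function.Injective (MulAction.toPermHom H (Sylow 2 H)) :=
      (MonoidHom.ker_eq_bot_iff _).1 (Subgroup.card_eq_one.1 h1)
    right
    exact dk_emb_alt 5 _ hinj hs5 (by rw [hn]; rfl)
  · left
    exact dk_stab_of_normal K (by rw [h3]; norm_num)
end

section
variable {H : Type*} [Group H]

lemma dk_stab_card_out {X : Type*} [MulAction H X] (x : X) :
    Nat.card (MulAction.stabilizer H (Quotient.mk (MulAction.orbitRel H X) x).out) =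
      Nat.card (MulAction.stabilizer H x) := by
  have h : (MulAction.orbitRel H X) (Quotient.mk (MulAction.orbitRel H X) x).out x :=
    Quotient.mk_out x
  exact Nat.card_congr (MulAction.stabilizerEquivStabilizerOfOrbitRel h).toEquiv

lemma dk_fixed_eq {X : Type*} [MulAction H X] [Finite X] (h : H)
    (hf : (MulAction.fixedBy X h).ncard = 2) (p q : X) (hpq : p ≠ q) (hp : h • p = p)
    (hq : h • q = q) (x : X) (hx : h • x = x) : x = p ∨ x = q := by
  have hsub : ({p, q} : Set X) ⊆ MulAction.fixedBy X h := by
    rintro y (rfl | rfl)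
    · exact hp
    · exact hq
  have := Set.eq_of_subset_of_ncard_le hsub (by rw [hf, Set.ncard_pair hpq]) (Set.toFinite _)
  have hx' : x ∈ ({p, q} : Set X) := by rw [this]; exact hx
  simpa using hx'

theorem dk_main [Finite H] [Nontrivial H] (X : Type*) [MulAction H X] [Finite X]
    (hf : ∀ h : H, h ≠ 1 → (MulAction.fixedBy X h).ncard = 2) :
    DkStab H X ∨ Nonempty (H ≃* alternatingGroup (Fin 4)) ∨
      Nonempty (H ≃* Equiv.Perm (Fin 4)) ∨ Nonempty (H ≃* alternatingGroup (Fin 5)) := by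
  classical
  have : Fintype H := Fintype.ofFinite H
  have : Fintype X := Fintype.ofFinite X
  let Ω := Quotient (MulAction.orbitRel H X)
  have : Fintype Ω := Fintype.ofFinite Ω
  set n := Nat.card H with hn
  have hn2 : 2 ≤ n := Finite.one_lt_card
  let e : Ω → ℕ := fun ω => Nat.card (MulAction.stabilizer H ω.out)
  have he : ∀ ω, 1 ≤ e ω := fun ω => Nat.card_pos
  have hen : ∀ ω, e ω ≤ n := fun ω => Subgroup.card_le_card_group _
  have hX : (Nat.card X : ℚ) = ∑ ω : Ω, (n : ℚ) / e ω := by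
    rw [Nat.card_congr (MulAction.selfEquivSigmaOrbitsQuotientStabilizer H X), Nat.card_sigma]
    push_cast
    apply Finset.sum_congr rfl
    intro ω _
    have h1 := (MulAction.stabilizer H ω.out).index_mul_card
    have h0 : (0 : ℚ) < e ω := by exact_mod_cast he ω
    rw [eq_div_iff h0.ne', hn, ← h1]
    push_cast
    rfl
  have hB := MulAction.sum_card_fixedBy_eq_card_orbits_mul_card_group H X
  have hB2 : ∑ g : H, Fintype.card (MulAction.fixedBy X g) = Nat.card X + (n - 1) * 2 := by
    rw [← Finset.add_sum_erase _ _ (Finset.mem_univ (1 : H))]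
    congr 1
    · rw [← Nat.card_eq_fintype_card]
      apply Nat.card_congr
      exact (Equiv.setCongr (by ext; simp)).trans (Equiv.Set.univ X)
    · rw [Finset.sum_const_nat (m := 2)]
      · rw [Finset.card_erase_of_mem (Finset.mem_univ _), Finset.card_univ, hn,
          Nat.card_eq_fintype_card]
      · intro g hg
        rw [← hf g (Finset.ne_of_mem_erase hg), ← Nat.card_eq_fintype_card, Nat.card_coe_set_eq]
  have hs : ∑ ω : Ω, (1 - 1 / (e ω : ℚ)) = 2 - 2 / n := by
    have hn0 : (0 : ℚ) < n := by positivity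
    have h1 : (Nat.card X : ℚ) + (n - 1) * 2 = Fintype.card Ω * n := by
      have := hB2.symm.trans hB
      rw [← Nat.card_eq_fintype_card (α := H), ← hn] at this
      have h3 : ((Nat.card X + (n - 1) * 2 : ℕ) : ℚ) = ((Fintype.card Ω * n : ℕ) : ℚ) := by
        rw [this]
      rw [Nat.cast_add, Nat.cast_mul, Nat.cast_sub (by omega)] at h3
      push_cast at h3
      exact h3
    rw [hX] at h1
    have h2 : ∑ ω : Ω, (n : ℚ) / e ω = n * ∑ ω : Ω, 1 / (e ω : ℚ) := by
      rw [Finset.mul_sum]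
      exact Finset.sum_congr rfl fun _ _ => by ring
    rw [h2] at h1
    rw [Finset.sum_sub_distrib, Finset.sum_const, Finset.card_univ, nsmul_eq_mul, mul_one]
    field_simp
    linarith
  rcases dk_count n hn2 e he hen hs with ⟨a, b, hab, ha, hb⟩ | ⟨a, ha2, ha⟩ | h | h | ⟨h, h1, h2⟩
  · left
    have hall : ∀ ω : Ω, e ω = n → ∀ g : H, g • ω.out = ω.out := by
      intro ω hω g
      have : MulAction.stabilizer H ω.out = ⊤ := Subgroup.eq_top_of_card_eq _ hω
      have h : g ∈ MulAction.stabilizer H ω.out := by rw [this]; trivial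
      exact h
    have hpq : a.out ≠ b.out := fun h => hab (Quotient.out_injective h)
    obtain ⟨h, hh⟩ := exists_ne (1 : H)
    refine ⟨h, hh, fun g x hx => ?_⟩
    rcases dk_fixed_eq h (hf h hh) _ _ hpq (hall a ha h) (hall b hb h) x hx with rfl | rfl
    · rw [hall a ha g, hall a ha h]
    · rw [hall b hb g, hall b hb h]
  · left
    set p := a.out with hp
    set S := MulAction.stabilizer H p with hS
    have hSc : Nat.card S = e a := rfl
    have hi : S.index = 2 := by
      have := S.index_mul_card
      rw [hSc, ← hn, ha] at this
      exact Nat.eq_of_mul_eq_mul_right (by omega) this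
    have hNor : S.Normal := Subgroup.normal_of_index_eq_two hi
    obtain ⟨h, hhS, hh1⟩ := S.bot_or_exists_ne_one.resolve_left (by
      intro hbot
      rw [hbot] at hSc
      simp at hSc
      omega)
    have hfix : ∀ g : H, h • (g • p) = g • p := by
      intro g
      have h1 : g⁻¹ * h * g ∈ S := by simpa using hNor.conj_mem h hhS g⁻¹
      have h2 : (g⁻¹ * h * g) • p = p := h1
      have h3 : h * g = g * (g⁻¹ * h * g) := by group
      rw [← mul_smul, h3, mul_smul, h2]
    obtain ⟨k, hk⟩ : ∃ k : H, k ∉ S := by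
      by_contra hcon
      push Not at hcon
      have : S = ⊤ := (Subgroup.eq_top_iff' S).2 hcon
      rw [this] at hi
      simp at hi
    have hpq : p ≠ k • p := fun hh => hk hh.symm
    refine ⟨h, hh1, fun g x hx => ?_⟩
    rcases dk_fixed_eq h (hf h hh1) _ _ hpq (by simpa using hfix 1) (hfix k) x hx with rfl | rfl
    · exact hfix g
    · have := hfix (g * k)
      rwa [mul_smul] at this
  · rcases dk_12_24 X (Or.inl h) with h | h | h
    · exact Or.inl h
    · exact Or.inr (Or.inl h)
    · exact Or.inr (Or.inr (Or.inl h))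
  · rcases dk_12_24 X (Or.inr h) with h | h | h
    · exact Or.inl h
    · exact Or.inr (Or.inl h)
    · exact Or.inr (Or.inr (Or.inl h))
  · have hA : ∀ x : X, Nat.card (MulAction.stabilizer H x) = 1 ∨
        Nat.card (MulAction.stabilizer H x) = 2 ∨ Nat.card (MulAction.stabilizer H x) = 3 ∨
        Nat.card (MulAction.stabilizer H x) = 5 := by
      intro x
      rw [← dk_stab_card_out x]
      exact h1 (Quotient.mk _ x)
    have hC : ∀ x y : X, Nat.card (MulAction.stabilizer H x) = 2 →
        Nat.card (MulAction.stabilizer H y) = 2 → ∃ g : H, g • x = y := by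
      intro x y hx hy
      rw [← dk_stab_card_out] at hx hy
      have := h2 _ _ hx hy
      have hxy : y ∈ MulAction.orbit H x := MulAction.orbitRel_apply.1 (Quotient.exact this.symm)
      exact hxy
    rcases dk_60 X h hf hA hC with h | h
    · exact Or.inl h
    · exact Or.inr (Or.inr (Or.inr h))
end

section
variable {K : Type*} [Field K]

lemma dk_sl2_of_unip (G : Subgroup (GL (Fin 2) K))
    (hU : ∀ (x : GL (Fin 2) K) (c : K), x.val = !![1, c; 0, 1] → x ∈ G) :
    (∀ x : GL (Fin 2) K, x.val.det = 1 → x ∈ G) ∨ ∀ x ∈ G, x.val 1 0 = 0 := by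
  by_cases hB : ∀ x ∈ G, x.val 1 0 = 0
  · exact Or.inr hB
  left
  push Not at hB
  obtain ⟨g, hgG, hc⟩ := hB
  let U : K → GL (Fin 2) K := fun c =>
    Matrix.GeneralLinearGroup.mkOfDetNeZero !![1, c; 0, 1] (by simp [Matrix.det_fin_two])
  let L : K → GL (Fin 2) K := fun c =>
    Matrix.GeneralLinearGroup.mkOfDetNeZero !![1, 0; c, 1] (by simp [Matrix.det_fin_two])
  have hUv : ∀ c, (U c).val = !![1, c; 0, 1] := fun c => rfl
  have hLv : ∀ c, (L c).val = !![1, 0; c, 1] := fun c => rfl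
  have hUG : ∀ c, U c ∈ G := fun c => hU (U c) c rfl
  have hdet : g.val.det ≠ 0 := by
    have := g.isUnit
    exact ((Matrix.isUnit_iff_isUnit_det _).1 this).ne_zero
  obtain ⟨a, b, c, d, hg⟩ : ∃ a b c d, g.val = !![a, b; c, d] :=
    ⟨_, _, _, _, Matrix.eta_fin_two g.val⟩
  rw [hg, Matrix.det_fin_two_of] at hdet
  have hc' : c ≠ 0 := by simpa [hg] using hc
  -- the Weyl-type element
  obtain ⟨w, hw⟩ : ∃ w : GL (Fin 2) K, w = U (-a / c) * g * U (-d / c) := ⟨_, rfl⟩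
  have hwG : w ∈ G := hw ▸ G.mul_mem (G.mul_mem (hUG _) hgG) (hUG _)
  have hwv : w.val = !![0, -(a * d - b * c) / c; c, 0] := by
    rw [hw, Units.val_mul, Units.val_mul, hUv, hUv, hg]
    ext i j
    fin_cases i <;> fin_cases j <;> simp [Matrix.mul_apply, Fin.sum_univ_two] <;> field_simp <;> ring
  have hLG : ∀ y, L y ∈ G := by
    intro y
    have : L y = w * U (-y * (a * d - b * c) / c ^ 2) * w⁻¹ := by
      rw [eq_mul_inv_iff_mul_eq]
      apply Units.ext
      rw [Units.val_mul, Units.val_mul, hUv, hLv, hwv]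
      ext i j
      fin_cases i <;> fin_cases j <;> simp [Matrix.mul_apply, Fin.sum_univ_two] <;> field_simp <;>
        ring
    rw [this]
    exact G.mul_mem (G.mul_mem hwG (hUG _)) (G.inv_mem hwG)
  have key : ∀ x : GL (Fin 2) K, x.val.det = 1 → x.val 1 0 ≠ 0 → x ∈ G := by
    intro x hx hx0
    obtain ⟨p, q, r, s, hxe⟩ : ∃ a b c d, x.val = !![a, b; c, d] :=
      ⟨_, _, _, _, Matrix.eta_fin_two x.val⟩
    rw [hxe, Matrix.det_fin_two_of] at hx
    have hr : r ≠ 0 := by simpa [hxe] using hx0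
    have : x = U ((p - 1) / r) * L r * U ((s - 1) / r) := by
      apply Units.ext
      rw [Units.val_mul, Units.val_mul, hUv, hUv, hLv, hxe]
      ext i j
      fin_cases i <;> fin_cases j <;> simp [Matrix.mul_apply, Fin.sum_univ_two] <;> field_simp <;>
        first | ring1 | linear_combination -hx | linear_combination hx
    rw [this]
    exact G.mul_mem (G.mul_mem (hUG _) (hLG _)) (hUG _)
  intro x hx
  by_cases h0 : x.val 1 0 = 0
  · have h00 : x.val 0 0 ≠ 0 := by
      intro h
      rw [Matrix.det_fin_two, h0, h] at hx
      simp at hx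
    have hm : L 1 * x ∈ G := by
      apply key
      · rw [Units.val_mul, Matrix.det_mul, hx, hLv]; simp [Matrix.det_fin_two]
      · rw [Units.val_mul, hLv]
        simpa [Matrix.mul_apply, Fin.sum_univ_two, h0] using h00
    exact (G.mul_mem_cancel_left (hLG 1)).1 hm
  · exact key x hx h0

lemma dk_nilp_conj (m b c : K) (h : m ^ 2 + b * c = 0) (hne : ¬ (m = 0 ∧ b = 0 ∧ c = 0)) :
    ∃ P : GL (Fin 2) K, !![m, b; c, -m] * P.val = P.val * !![0, 1; 0, 0] := by
  by_cases hc : c = 0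
  · subst hc
    have hm : m = 0 := by simpa using h
    subst hm
    have hb : b ≠ 0 := by simpa using hne
    refine ⟨Matrix.GeneralLinearGroup.mkOfDetNeZero !![b, 0; 0, 1]
      (by simpa [Matrix.det_fin_two] using hb), ?_⟩
    change _ * !![b, 0; 0, 1] = !![b, 0; 0, 1] * _
    ext i j
    fin_cases i <;> fin_cases j <;> simp [Matrix.mul_apply, Fin.sum_univ_two]
  · refine ⟨Matrix.GeneralLinearGroup.mkOfDetNeZero !![m, 1; c, 0]
      (by simpa [Matrix.det_fin_two] using hc), ?_⟩
    change _ * !![m, 1; c, 0] = !![m, 1; c, 0] * _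
    ext i j
    fin_cases i <;> fin_cases j <;> simp [Matrix.mul_apply, Fin.sum_univ_two]
    · linear_combination h
    · ring

/-- Powers of a matrix `l + N` with `N² = 0`. -/
lemma dk_pow (N : Matrix (Fin 2) (Fin 2) K) (l : K) (hN : N * N = 0) (k : ℕ) :
    l • (l • (1 : Matrix (Fin 2) (Fin 2) K) + N) ^ k =
      l ^ k • (l • (1 : Matrix (Fin 2) (Fin 2) K) + (k : K) • N) := by
  induction k with
  | zero => simp
  | succ k ih =>
    rw [pow_succ, ← smul_mul_assoc, ih]
    simp only [mul_add, add_mul, smul_mul_assoc, mul_smul_comm, one_mul, mul_one, hN, smul_zero,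
      add_zero, smul_add, smul_smul, Nat.cast_succ]
    module
end

lemma dk_caseA (ℓ : ℕ) [Fact ℓ.Prime]
    (G : Subgroup (GL (Fin 2) (ZMod ℓ))) (g : GL (Fin 2) (ZMod ℓ)) (hg : g ∈ G)
    (m b c l : ZMod ℓ) (hgv : g.val = l • 1 + !![m, b; c, -m]) (h : m ^ 2 + b * c = 0)
    (hne : ¬ (m = 0 ∧ b = 0 ∧ c = 0)) :
    (∀ x : GL (Fin 2) (ZMod ℓ), x.val.det = 1 → x ∈ G) ∨
      ∃ p : GL (Fin 2) (ZMod ℓ), ∀ x ∈ G, (p * x * p⁻¹).val 1 0 = 0 := by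
  set N : Matrix (Fin 2) (Fin 2) (ZMod ℓ) := !![m, b; c, -m] with hN
  have hNN : N * N = 0 := by
    rw [hN]
    ext i j
    fin_cases i <;> fin_cases j <;> simp [Matrix.mul_apply, Fin.sum_univ_two]
    · linear_combination h
    · ring
    · ring
    · linear_combination h
  have hl : l ≠ 0 := by
    rintro rfl
    have h1 : g.val * g.val = 0 := by rw [hgv]; simpa using hNN
    have h3 := congrArg (fun A => g⁻¹.val * A) h1
    simp only [← mul_assoc, Units.inv_mul, one_mul, mul_zero] at h3
    exact g.ne_zero h3
  have hT : ∀ t : ZMod ℓ, ∃ x ∈ G, x.val = 1 + t • N := by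
    intro t
    let k : ℕ := (ℓ - 1) * (-t * l).val
    refine ⟨g ^ k, G.pow_mem hg k, ?_⟩
    have h1 := dk_pow N l hNN k
    have hlk : l ^ k = 1 := by rw [pow_mul, ZMod.pow_card_sub_one_eq_one hl, one_pow]
    have hk : (k : ZMod ℓ) = t * l := by
      simp only [k]
      rw [Nat.cast_mul, ZMod.natCast_val, ZMod.cast_id', id,
        Nat.cast_sub (Fact.out : ℓ.Prime).one_lt.le]
      simp
    rw [hlk, hk, one_smul, ← hgv] at h1
    have h3 := congrArg (fun A => l⁻¹ • A) h1
    simp only [smul_smul, inv_mul_cancel₀ hl, one_smul, smul_add] at h3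
    rw [Units.val_pow_eq_pow_val, h3, mul_comm t l, inv_mul_cancel_left₀ hl]
  obtain ⟨P, hP⟩ := dk_nilp_conj m b c h hne
  rw [← hN] at hP
  let G' : Subgroup (GL (Fin 2) (ZMod ℓ)) := G.comap (MulAut.conj P).toMonoidHom
  have hG' : ∀ x, x ∈ G' ↔ P * x * P⁻¹ ∈ G := fun x => Iff.rfl
  have hU' : ∀ (x : GL (Fin 2) (ZMod ℓ)) (t : ZMod ℓ), x.val = !![1, t; 0, 1] → x ∈ G' := by
    intro x t hx
    rw [hG']
    obtain ⟨y, hyG, hy⟩ := hT t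
    have : P * x * P⁻¹ = y := by
      rw [mul_inv_eq_iff_eq_mul]
      apply Units.ext
      rw [Units.val_mul, Units.val_mul, hy, hx, add_mul, one_mul, smul_mul_assoc, hP]
      have : (!![1, t; 0, 1] : Matrix (Fin 2) (Fin 2) (ZMod ℓ)) = 1 + t • !![0, 1; 0, 0] := by
        ext i j
        fin_cases i <;> fin_cases j <;> simp
      rw [this, mul_add, mul_one, mul_smul_comm]
    rw [this]
    exact hyG
  rcases dk_sl2_of_unip G' hU' with hS | hB
  · left
    intro x hx
    have := hS (P⁻¹ * x * P) (by
      have e : (P⁻¹ * x * P).val.det = (P⁻¹ * P).val.det * x.val.det := by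
        simp only [Units.val_mul, Matrix.det_mul]; ring
      rw [e, hx]; simp)
    rw [hG'] at this
    have e : P * (P⁻¹ * x * P) * P⁻¹ = x := by group
    rwa [e] at this
  · right
    refine ⟨P⁻¹, fun x hx => ?_⟩
    apply hB
    rw [hG']
    have e : P * (P⁻¹ * x * P⁻¹⁻¹) * P⁻¹ = x := by group
    rwa [e]

section
variable {K : Type*} [Field K]

/-- Traceless matrices of determinant `-1` or `-ε`. -/
def DkX (ε : K) : Type _ :=
  {A : Matrix (Fin 2) (Fin 2) K // A.trace = 0 ∧ (A.det = -1 ∨ A.det = -ε)}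

instance (ε : K) [Finite K] : Finite (DkX ε) := by
  unfold DkX
  infer_instance

lemma dk_conj_trace (g : GL (Fin 2) K) (A : Matrix (Fin 2) (Fin 2) K) :
    (g.val * A * g⁻¹.val).trace = A.trace := by
  rw [Matrix.trace_mul_comm, ← mul_assoc, Units.inv_mul, one_mul]

lemma dk_conj_det (g : GL (Fin 2) K) (A : Matrix (Fin 2) (Fin 2) K) :
    (g.val * A * g⁻¹.val).det = A.det := by
  rw [Matrix.det_mul_comm, ← mul_assoc, Units.inv_mul, one_mul]

instance dkAction (ε : K) : MulAction (GL (Fin 2) K) (DkX ε) where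
  smul g A := ⟨g.val * A.1 * g⁻¹.val, by
    rw [dk_conj_trace, dk_conj_det]; exact A.2⟩
  one_smul A := by
    apply Subtype.ext
    change (1 : GL (Fin 2) K).val * A.1 * (1 : GL (Fin 2) K)⁻¹.val = A.1
    simp
  mul_smul g h A := by
    apply Subtype.ext
    change (g * h).val * A.1 * (g * h)⁻¹.val = g.val * (h.val * A.1 * h⁻¹.val) * g⁻¹.val
    rw [_root_.mul_inv_rev, Units.val_mul, Units.val_mul]
    simp only [mul_assoc]

lemma dk_smul_val (ε : K) (g : GL (Fin 2) K) (A : DkX ε) :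
    (g • A).1 = g.val * A.1 * g⁻¹.val := rfl

lemma dk_conj_eq_iff (g : GL (Fin 2) K) (A B : Matrix (Fin 2) (Fin 2) K) :
    g.val * A * g⁻¹.val = B ↔ g.val * A = B * g.val := by
  constructor
  · rintro rfl
    rw [mul_assoc, Units.inv_mul, mul_one]
  · intro h
    rw [h, mul_assoc, Units.mul_inv, mul_one]

lemma dk_smul_eq_iff (ε : K) (g : GL (Fin 2) K) (A B : DkX ε) :
    g • A = B ↔ g.val * A.1 = B.1 * g.val := by
  rw [← dk_conj_eq_iff, ← dk_smul_val]
  exact Subtype.ext_iff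

lemma dk_center_smul (ε : K) (g : GL (Fin 2) K) (hg : g ∈ Subgroup.center (GL (Fin 2) K))
    (A : DkX ε) : g • A = A := by
  rw [dk_smul_eq_iff]
  rw [Matrix.GeneralLinearGroup.mem_center_iff_val_mem_range_scalar] at hg
  obtain ⟨t, ht⟩ := hg
  rw [← ht]
  exact (Matrix.scalar_commute t (fun r => mul_comm t r) A.1).eq

/-- The negation on `DkX`. -/
def DkX.neg {ε : K} (A : DkX ε) : DkX ε :=
  ⟨-A.1, by
    have h := A.2
    rw [Matrix.trace_neg, h.1, Matrix.det_neg]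
    simpa using h.2⟩

lemma dk_trace0 (A : Matrix (Fin 2) (Fin 2) K) (h : A.trace = 0) :
    ∃ x y z, A = !![x, y; z, -x] := by
  refine ⟨A 0 0, A 0 1, A 1 0, ?_⟩
  rw [Matrix.trace_fin_two] at h
  have : A 1 1 = - A 0 0 := by linear_combination h
  rw [← this]
  exact Matrix.eta_fin_two A

lemma dk_ne_neg (h2 : (2 : K) ≠ 0) {ε : K} (h0 : ε ≠ 0) (A : DkX ε) : A ≠ A.neg := by
  intro h
  have h1 : A.1 = -A.1 := congrArg Subtype.val h
  have h3 : A.1 = 0 := by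
    ext i j
    have := congrFun (congrFun h1 i) j
    rw [Matrix.neg_apply] at this
    have h4 : 2 * A.1 i j = 0 := by linear_combination this
    simpa [h2] using h4
  have h5 := A.2.2
  rw [h3] at h5
  simp at h5
  exact h0 h5

lemma dk_commute (h2 : (2 : K) ≠ 0) (m b c x y z l : K) (hne : ¬ (m = 0 ∧ b = 0 ∧ c = 0))
    (h : (l • (1 : Matrix (Fin 2) (Fin 2) K) + !![m, b; c, -m]) * !![x, y; z, -x] =
      !![x, y; z, -x] * (l • 1 + !![m, b; c, -m])) :
    ∃ s : K, x = s * m ∧ y = s * b ∧ z = s * c := by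
  have e00 := congrFun (congrFun h 0) 0
  have e01 := congrFun (congrFun h 0) 1
  have e10 := congrFun (congrFun h 1) 0
  simp [Matrix.mul_apply, Fin.sum_univ_two] at e00 e01 e10
  have f1 : b * z = y * c := by linear_combination e00
  have f2 : m * y = x * b := by
    apply mul_left_cancel₀ h2
    linear_combination e01
  have f3 : m * z = x * c := by
    apply mul_left_cancel₀ h2
    linear_combination -e10
  by_cases hm : m = 0
  · by_cases hb : b = 0
    · have hc : c ≠ 0 := fun hc => hne ⟨hm, hb, hc⟩
      refine ⟨z / c, ?_, ?_, ?_⟩ <;> field_simp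
      · linear_combination -f3
      · linear_combination -f1
    · refine ⟨y / b, ?_, ?_, ?_⟩ <;> field_simp
      · linear_combination -f2
      · linear_combination f1
  · refine ⟨x / m, ?_, ?_, ?_⟩ <;> field_simp
    · linear_combination f2
    · linear_combination f3

lemma dk_decomp (h2 : (2 : K) ≠ 0) (A : Matrix (Fin 2) (Fin 2) K) :
    ∃ m b c l : K, A = l • (1 : Matrix (Fin 2) (Fin 2) K) + !![m, b; c, -m] := by
  refine ⟨(A 0 0 - A 1 1) / 2, A 0 1, A 1 0, (A 0 0 + A 1 1) / 2, ?_⟩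
  ext i j
  fin_cases i <;> fin_cases j <;> simp <;> field_simp <;> ring

lemma dk_fixed_two (h2 : (2 : K) ≠ 0) (ε : K) (hε : ¬ IsSquare ε)
    (hd : ∀ δ : K, δ ≠ 0 → ∃ r : K, r ≠ 0 ∧ (δ = r ^ 2 ∨ δ = ε * r ^ 2))
    (g : GL (Fin 2) K) (m b c l : K)
    (hgv : g.val = l • (1 : Matrix (Fin 2) (Fin 2) K) + !![m, b; c, -m])
    (hδ : m ^ 2 + b * c ≠ 0) :
    {A : DkX ε | g • A = A}.ncard = 2 := by
  have h0 : ε ≠ 0 := by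
    rintro rfl
    exact hε (IsSquare.zero)
  have hne : ¬ (m = 0 ∧ b = 0 ∧ c = 0) := by
    rintro ⟨rfl, rfl, rfl⟩
    simp at hδ
  obtain ⟨r, hr, hrr⟩ := hd _ hδ
  let A0 : DkX ε := ⟨!![r⁻¹ * m, r⁻¹ * b; r⁻¹ * c, -(r⁻¹ * m)], by
    rw [Matrix.trace_fin_two_of, Matrix.det_fin_two_of]
    refine ⟨by ring, ?_⟩
    rcases hrr with h | h
    · left
      field_simp
      linear_combination -h
    · right
      field_simp
      linear_combination -h⟩
  have hA0 : A0.1 = !![r⁻¹ * m, r⁻¹ * b; r⁻¹ * c, -(r⁻¹ * m)] := rfl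
  rw [Set.ncard_eq_two]
  refine ⟨A0, A0.neg, dk_ne_neg h2 h0 A0, ?_⟩
  ext A
  simp only [Set.mem_ofPred_eq, Set.mem_insert_iff, Set.mem_singleton_iff]
  constructor
  · intro h
    rw [dk_smul_eq_iff, hgv] at h
    obtain ⟨x, y, z, hA⟩ := dk_trace0 A.1 A.2.1
    rw [hA] at h
    obtain ⟨s, rfl, rfl, rfl⟩ := dk_commute h2 m b c x y z l hne h
    have hdet := A.2.2
    rw [hA, Matrix.det_fin_two_of] at hdet
    have hsr : (s * r) ^ 2 = 1 := by
      rcases hrr with h | h <;> rcases hdet with h' | h'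
      · linear_combination -h' - s ^ 2 * h
      · exact absurd ⟨s * r, by linear_combination h' + s ^ 2 * h⟩ hε
      · exfalso
        have h3 : ε * (s * r) ^ 2 = 1 := by linear_combination -h' - s ^ 2 * h
        have h4 : s * r ≠ 0 := by
          intro h5
          rw [h5] at h3
          simp at h3
        exact hε ⟨(s * r)⁻¹, by rw [← _root_.mul_inv_rev, ← pow_two]; exact eq_inv_of_mul_eq_one_left h3⟩
      · apply mul_left_cancel₀ h0
        linear_combination -h' - s ^ 2 * h
    have hsr' : s * r = 1 ∨ s * r = -1 := by
      apply eq_or_eq_neg_of_sq_eq_sq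
      rw [hsr, one_pow]
    rcases hsr' with h | h
    · left
      have hs : s = r⁻¹ := eq_inv_of_mul_eq_one_left h
      apply Subtype.ext
      rw [hA, hA0, hs]
    · right
      have hs : s = -r⁻¹ := by
        rw [← neg_eq_iff_eq_neg]
        apply eq_inv_of_mul_eq_one_left
        linear_combination -h
      apply Subtype.ext
      change A.1 = -A0.1
      rw [hA, hA0, hs]
      ext i j
      fin_cases i <;> fin_cases j <;> simp
  · have hc : g.val * A0.1 = A0.1 * g.val := by
      rw [hgv, hA0]
      ext i j
      fin_cases i <;> fin_cases j <;> simp [Matrix.mul_apply, Fin.sum_univ_two] <;> ring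
    rintro (rfl | rfl)
    · rw [dk_smul_eq_iff]
      exact hc
    · rw [dk_smul_eq_iff]
      change g.val * (-A0.1) = (-A0.1) * g.val
      rw [mul_neg, neg_mul, hc]

lemma dk_companion (h2 : (2 : K) ≠ 0) (μ : K) (hμ : μ ≠ 0) (A : Matrix (Fin 2) (Fin 2) K)
    (ht : A.trace = 0) (hdet : A.det = -μ) :
    ∃ P : GL (Fin 2) K, A * P.val = P.val * !![0, μ; 1, 0] := by
  obtain ⟨x, y, z, rfl⟩ := dk_trace0 A ht
  rw [Matrix.det_fin_two_of] at hdet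
  by_cases hz : z = 0
  · by_cases hy : y = 0
    · subst hz hy
      have hx : x ≠ 0 := by
        rintro rfl
        apply hμ
        linear_combination hdet
      refine ⟨Matrix.GeneralLinearGroup.mkOfDetNeZero !![1, x; 1, -x] ?_, ?_⟩
      · rw [Matrix.det_fin_two_of]
        have e : 1 * -x - x * 1 = -(2 * x) := by ring
        rw [e]
        exact neg_ne_zero.2 (mul_ne_zero h2 hx)
      · change _ * !![1, x; 1, -x] = !![1, x; 1, -x] * _
        ext i j
        fin_cases i <;> fin_cases j <;> simp [Matrix.mul_apply, Fin.sum_univ_two] <;>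
          linear_combination -hdet
    · refine ⟨Matrix.GeneralLinearGroup.mkOfDetNeZero !![0, y; 1, -x] ?_, ?_⟩
      · rw [Matrix.det_fin_two_of]
        simpa using hy
      · change _ * !![0, y; 1, -x] = !![0, y; 1, -x] * _
        ext i j
        fin_cases i <;> fin_cases j <;> simp [Matrix.mul_apply, Fin.sum_univ_two]
        · ring
        · linear_combination -hdet
  · refine ⟨Matrix.GeneralLinearGroup.mkOfDetNeZero !![1, x; 0, z] ?_, ?_⟩
    · rw [Matrix.det_fin_two_of]
      simpa using hz
    · change _ * !![1, x; 0, z] = !![1, x; 0, z] * _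
      ext i j
      fin_cases i <;> fin_cases j <;> simp [Matrix.mul_apply, Fin.sum_univ_two]
      · linear_combination -hdet
      · ring

lemma dk_diag (h2 : (2 : K) ≠ 0) (A : Matrix (Fin 2) (Fin 2) K)
    (ht : A.trace = 0) (hdet : A.det = -1) :
    ∃ P : GL (Fin 2) K, A * P.val = P.val * !![1, 0; 0, -1] := by
  obtain ⟨P, hP⟩ := dk_companion h2 1 one_ne_zero A ht hdet
  let Q : GL (Fin 2) K := Matrix.GeneralLinearGroup.mkOfDetNeZero !![1, 1; 1, -1] (by
    rw [Matrix.det_fin_two_of]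
    have e : (1 : K) * -1 - 1 * 1 = -2 := by ring
    rw [e]
    exact neg_ne_zero.2 h2)
  have hQ : (!![0, 1; 1, 0] : Matrix (Fin 2) (Fin 2) K) * Q.val = Q.val * !![1, 0; 0, -1] := by
    change _ * !![1, 1; 1, -1] = !![1, 1; 1, -1] * _
    ext i j
    fin_cases i <;> fin_cases j <;> simp [Matrix.mul_apply, Fin.sum_univ_two]
  refine ⟨P * Q, ?_⟩
  rw [Units.val_mul, ← mul_assoc, hP, mul_assoc, hQ, mul_assoc]

lemma dk_normalizer (S : Set (GL (Fin 2) K)) (D : Matrix (Fin 2) (Fin 2) K)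
    (hS : ∀ x, x ∈ S ↔ x.val * D = D * x.val) (A : Matrix (Fin 2) (Fin 2) K)
    (P : GL (Fin 2) K) (hP : A * P.val = P.val * D) (x : GL (Fin 2) K)
    (hx : x.val * A = A * x.val ∨ x.val * A = -A * x.val) :
    P⁻¹ * x * P⁻¹⁻¹ ∈ Subgroup.setNormalizer S := by
  have hD : D = P⁻¹.val * A * P.val := by
    rw [mul_assoc, hP, ← mul_assoc, Units.inv_mul, one_mul]
  have hy : (P⁻¹ * x * P).val * D = D * (P⁻¹ * x * P).val ∨
      (P⁻¹ * x * P).val * D = -D * (P⁻¹ * x * P).val := by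
    have e1 : (P⁻¹ * x * P).val * D = P⁻¹.val * (x.val * A) * P.val := by
      rw [hD]
      simp only [Units.val_mul, mul_assoc]
      rw [Units.mul_inv_cancel_left]
    have e2 : D * (P⁻¹ * x * P).val = P⁻¹.val * (A * x.val) * P.val := by
      rw [hD]
      simp only [Units.val_mul, mul_assoc]
      rw [Units.mul_inv_cancel_left]
    rw [neg_mul, e1, e2]
    rcases hx with h | h
    · left; rw [h]
    · right; rw [h]; simp
  rw [inv_inv]
  generalize P⁻¹ * x * P = y at hy
  have hy' : y.val * D * y⁻¹.val = D ∨ y.val * D * y⁻¹.val = -D := by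
    rwa [dk_conj_eq_iff, dk_conj_eq_iff]
  have key : ∀ h : GL (Fin 2) K, h ∈ S ↔ y * h * y⁻¹ ∈ S := by
    intro h
    rw [hS, hS]
    have e1 : h.val * D = D * h.val ↔
        (y * h * y⁻¹).val * (y.val * D * y⁻¹.val) = (y.val * D * y⁻¹.val) * (y * h * y⁻¹).val := by
      have f1 : (y * h * y⁻¹).val * (y.val * D * y⁻¹.val) = y.val * (h.val * D) * y⁻¹.val := by
        simp only [Units.val_mul, mul_assoc]
        rw [Units.inv_mul_cancel_left]
      have f2 : (y.val * D * y⁻¹.val) * (y * h * y⁻¹).val = y.val * (D * h.val) * y⁻¹.val := by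
        simp only [Units.val_mul, mul_assoc]
        rw [Units.inv_mul_cancel_left]
      rw [f1, f2, Units.mul_left_inj, Units.mul_right_inj]
    rw [e1]
    rcases hy' with h' | h' <;> rw [h']
    rw [mul_neg, neg_mul, neg_inj]
  exact Subgroup.mem_set_normalizer_iff.2 key

end

/-- The action of the image in `PGL₂`. -/
def dkHom (ℓ : ℕ) [Fact ℓ.Prime] (ε : ZMod ℓ) :
    (GL (Fin 2) (ZMod ℓ) ⧸ Subgroup.center (GL (Fin 2) (ZMod ℓ))) →* Equiv.Perm (DkX ε) :=
  QuotientGroup.lift (Subgroup.center (GL (Fin 2) (ZMod ℓ)))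
    (MulAction.toPermHom (GL (Fin 2) (ZMod ℓ)) (DkX ε)) (by
      intro g hg
      ext1 A
      exact dk_center_smul ε g hg A)

lemma dk_caseB (ℓ : ℕ) [Fact ℓ.Prime] (h2 : (2 : ZMod ℓ) ≠ 0) (ε : ZMod ℓ) (hε : ¬ IsSquare ε)
    (G : Subgroup (GL (Fin 2) (ZMod ℓ)))
    (hG : ∀ g ∈ G, ∀ m b c l : ZMod ℓ,
      g.val = l • (1 : Matrix (Fin 2) (Fin 2) (ZMod ℓ)) + !![m, b; c, -m] →
      ¬ (m = 0 ∧ b = 0 ∧ c = 0) → m ^ 2 + b * c ≠ 0) :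
    (∀ x ∈ G, x.val 1 0 = 0) ∨
    (∃ A : DkX ε, ∀ x ∈ G, x.val * A.1 = A.1 * x.val ∨ x.val * A.1 = -A.1 * x.val) ∨
    (Nonempty ((G.map (QuotientGroup.mk' (Subgroup.center (GL (Fin 2) (ZMod ℓ)))))
        ≃* alternatingGroup (Fin 4)) ∨
     Nonempty ((G.map (QuotientGroup.mk' (Subgroup.center (GL (Fin 2) (ZMod ℓ)))))
        ≃* Equiv.Perm (Fin 4)) ∨
     Nonempty ((G.map (QuotientGroup.mk' (Subgroup.center (GL (Fin 2) (ZMod ℓ)))))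
        ≃* alternatingGroup (Fin 5))) := by
  have h0 : ε ≠ 0 := by
    rintro rfl
    exact hε (IsSquare.zero)
  have hd : ∀ δ : ZMod ℓ, δ ≠ 0 → ∃ r : ZMod ℓ, r ≠ 0 ∧ (δ = r ^ 2 ∨ δ = ε * r ^ 2) := by
    intro δ hδ
    by_cases hs : IsSquare δ
    · obtain ⟨r, rfl⟩ := hs
      exact ⟨r, by rintro rfl; simp at hδ, Or.inl (pow_two r).symm⟩
    · have hsq : IsSquare (δ * ε) := by
        have e1 := quadraticChar_neg_one_iff_not_isSquare.2 hs
        have e2 := quadraticChar_neg_one_iff_not_isSquare.2 hε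
        rw [← quadraticChar_one_iff_isSquare (mul_ne_zero hδ h0), map_mul, e1, e2]
        norm_num
      obtain ⟨r, hr⟩ := hsq
      refine ⟨r / ε, ?_, Or.inr ?_⟩
      · refine div_ne_zero ?_ h0
        rintro rfl
        rw [mul_zero] at hr
        exact mul_ne_zero hδ h0 hr
      · field_simp
        linear_combination hr
  let Z := Subgroup.center (GL (Fin 2) (ZMod ℓ))
  have hZ : ∀ g ∈ G, g ∉ Z → ∃ m b c l : ZMod ℓ,
      g.val = l • (1 : Matrix (Fin 2) (Fin 2) (ZMod ℓ)) + !![m, b; c, -m] ∧ m ^ 2 + b * c ≠ 0 := by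
    intro g hg hgZ
    obtain ⟨m, b, c, l, h⟩ := dk_decomp h2 g.val
    refine ⟨m, b, c, l, h, hG g hg m b c l h ?_⟩
    rintro ⟨rfl, rfl, rfl⟩
    apply hgZ
    change g ∈ Subgroup.center _
    rw [Matrix.GeneralLinearGroup.mem_center_iff_val_mem_range_scalar]
    refine ⟨l, ?_⟩
    rw [h]
    ext i j
    fin_cases i <;> fin_cases j <;> simp
  by_cases hall : ∀ g ∈ G, g ∈ Z
  · left
    intro x hx
    have := hall x hx
    change x ∈ Subgroup.center _ at this
    rw [Matrix.GeneralLinearGroup.mem_center_iff_val_mem_range_scalar] at this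
    obtain ⟨t, ht⟩ := this
    rw [← ht]
    simp
  right
  push Not at hall
  obtain ⟨g0, hg0, hg0Z⟩ := hall
  let H := G.map (QuotientGroup.mk' Z)
  have hmk : ∀ g ∈ G, QuotientGroup.mk' Z g ∈ H := fun g hg => ⟨g, hg, rfl⟩
  let _inst : MulAction H (DkX ε) := MulAction.compHom (DkX ε) ((dkHom ℓ ε).comp H.subtype)
  have hsm : ∀ (g : GL (Fin 2) (ZMod ℓ)) (hg : g ∈ G) (A : DkX ε),
      (⟨QuotientGroup.mk' Z g, hmk g hg⟩ : H) • A = g • A := fun g hg A => rfl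
  have hrep : ∀ h : H, ∃ g, ∃ hg : g ∈ G, h = ⟨QuotientGroup.mk' Z g, hmk g hg⟩ := by
    rintro ⟨_, g, hg, rfl⟩
    exact ⟨g, hg, rfl⟩
  have hone : ∀ (g : GL (Fin 2) (ZMod ℓ)) (hg : g ∈ G),
      (⟨QuotientGroup.mk' Z g, hmk g hg⟩ : H) = 1 ↔ g ∈ Z := by
    intro g hg
    rw [← QuotientGroup.eq_one_iff (N := Z) g]
    exact Subtype.ext_iff
  have : Nontrivial H := ⟨⟨_, hmk g0 hg0⟩, 1, fun h => hg0Z ((hone g0 hg0).1 h)⟩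
  have hf : ∀ h : H, h ≠ 1 → (MulAction.fixedBy (DkX ε) h).ncard = 2 := by
    intro h hh
    obtain ⟨g, hg, rfl⟩ := hrep h
    obtain ⟨m, b, c, l, hgv, hδ⟩ := hZ g hg (fun h => hh ((hone g hg).2 h))
    exact dk_fixed_two h2 ε hε hd g m b c l hgv hδ
  rcases dk_main (H := H) (DkX ε) hf with hs | h6
  · left
    obtain ⟨h, hh1, hh⟩ := hs
    have hfh := hf h hh1
    obtain ⟨A, hA⟩ : (MulAction.fixedBy (DkX ε) h).Nonempty := by
      apply Set.nonempty_of_ncard_ne_zero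
      rw [hfh]
      norm_num
    have hA' : h • A = A := hA
    have hnA : h • A.neg = A.neg := by
      obtain ⟨g, hg, rfl⟩ := hrep h
      rw [hsm g hg, dk_smul_eq_iff] at hA' ⊢
      change g.val * (-A.1) = (-A.1) * g.val
      rw [mul_neg, neg_mul, hA']
    refine ⟨A, fun x hx => ?_⟩
    have h3 := hh ⟨_, hmk x hx⟩ A hA'
    rcases dk_fixed_eq h hfh A A.neg (dk_ne_neg h2 h0 A) hA' hnA _ h3 with h4 | h4
    · left
      rwa [hsm x hx, dk_smul_eq_iff] at h4
    · right
      rwa [hsm x hx, dk_smul_eq_iff] at h4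
  · right
    exact h6

/-- Dickson's classification of the subgroups of `GL₂(𝔽_ℓ)` for an odd prime `ℓ`. -/
theorem stmt_5 (ℓ : ℕ) [Fact ℓ.Prime] (hodd : Odd ℓ) (ε : ZMod ℓ) (hε : ¬ IsSquare ε)
    (G : Subgroup (GL (Fin 2) (ZMod ℓ))) :
    -- (1) `G` contains `SL₂(𝔽_ℓ)`
    (∀ x : GL (Fin 2) (ZMod ℓ), (x : Matrix (Fin 2) (Fin 2) (ZMod ℓ)).det = 1 → x ∈ G) ∨
    -- (2) `G` is conjugate to a subgroup of the Borel subgroup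
    IsConjToSubgroupOf G (borelSubset ℓ) ∨
    -- (3) `G` is conjugate to a subgroup of the non-split Cartan subgroup
    IsConjToSubgroupOf G (nonsplitCartan ℓ ε) ∨
    -- (4) `G` is conjugate to a subgroup of `𝒞_s⁺(ℓ)` but not to any subgroup of `𝒞_s(ℓ)`
    (IsConjToSubgroupOf G (Subgroup.setNormalizer (splitCartan ℓ) : Set (GL (Fin 2) (ZMod ℓ))) ∧
      ¬ IsConjToSubgroupOf G (splitCartan ℓ)) ∨
    -- (5) `G` is conjugate to a subgroup of `𝒞_ns⁺(ℓ)` but not to any subgroup of `𝒞_ns(ℓ)`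
    (IsConjToSubgroupOf G
        (Subgroup.setNormalizer (nonsplitCartan ℓ ε) : Set (GL (Fin 2) (ZMod ℓ))) ∧
      ¬ IsConjToSubgroupOf G (nonsplitCartan ℓ ε)) ∨
    -- (6) the image of `G` in `PGL₂(𝔽_ℓ)` is isomorphic to `A₄`, `S₄`, or `A₅`
    (Nonempty ((G.map (QuotientGroup.mk' (Subgroup.center (GL (Fin 2) (ZMod ℓ)))))
        ≃* alternatingGroup (Fin 4)) ∨
     Nonempty ((G.map (QuotientGroup.mk' (Subgroup.center (GL (Fin 2) (ZMod ℓ)))))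
        ≃* Equiv.Perm (Fin 4)) ∨
     Nonempty ((G.map (QuotientGroup.mk' (Subgroup.center (GL (Fin 2) (ZMod ℓ)))))
        ≃* alternatingGroup (Fin 5))) := by
  have h2 : (2 : ZMod ℓ) ≠ 0 := by
    have hF : ringChar (ZMod ℓ) ≠ 2 := by
      rw [ZMod.ringChar_zmod_n]
      rintro rfl
      exact absurd hodd (by decide)
    exact Ring.two_ne_zero hF
  have h0 : ε ≠ 0 := by
    rintro rfl
    exact hε (IsSquare.zero)
  by_cases hA : ∃ g ∈ G, ∃ m b c l : ZMod ℓ,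
      g.val = l • (1 : Matrix (Fin 2) (Fin 2) (ZMod ℓ)) + !![m, b; c, -m] ∧
      ¬ (m = 0 ∧ b = 0 ∧ c = 0) ∧ m ^ 2 + b * c = 0
  · obtain ⟨g, hg, m, b, c, l, hgv, hne, h⟩ := hA
    rcases dk_caseA ℓ G g hg m b c l hgv h hne with h1 | ⟨p, hp⟩
    · exact Or.inl h1
    · exact Or.inr (Or.inl ⟨p, hp⟩)
  have hG : ∀ g ∈ G, ∀ m b c l : ZMod ℓ,
      g.val = l • (1 : Matrix (Fin 2) (Fin 2) (ZMod ℓ)) + !![m, b; c, -m] →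
      ¬ (m = 0 ∧ b = 0 ∧ c = 0) → m ^ 2 + b * c ≠ 0 :=
    fun g hg m b c l hgv hne h => hA ⟨g, hg, m, b, c, l, hgv, hne, h⟩
  rcases dk_caseB ℓ h2 ε hε G hG with hB | ⟨A, hAG⟩ | h6
  · refine Or.inr (Or.inl ⟨1, fun x hx => ?_⟩)
    rw [one_mul, inv_one, mul_one]
    exact hB x hx
  · rcases A.2.2 with hd | hd
    · obtain ⟨P, hP⟩ := dk_diag h2 A.1 A.2.1 hd
      have hS : ∀ x : GL (Fin 2) (ZMod ℓ), x ∈ splitCartan ℓ ↔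
          x.val * !![1, 0; 0, -1] = !![1, 0; 0, -1] * x.val := by
        intro x
        obtain ⟨p, q, r, s, hx⟩ : ∃ a b c d, x.val = !![a, b; c, d] :=
          ⟨_, _, _, _, Matrix.eta_fin_two x.val⟩
        change x.val 0 1 = 0 ∧ x.val 1 0 = 0 ↔ _
        rw [hx]
        constructor
        · rintro ⟨h1, h3⟩
          simp only [Matrix.of_apply, Matrix.cons_val] at h1 h3
          subst h1 h3
          ext i j
          fin_cases i <;> fin_cases j <;> simp [Matrix.mul_apply, Fin.sum_univ_two]
        · intro h
          have e1 := congrFun (congrFun h 0) 1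
          have e2 := congrFun (congrFun h 1) 0
          simp [Matrix.mul_apply, Fin.sum_univ_two] at e1 e2
          have f1 : q = 0 := by
            apply (mul_eq_zero.1 (_ : 2 * q = 0)).resolve_left h2
            linear_combination -e1
          have f2 : r = 0 := by
            apply (mul_eq_zero.1 (_ : 2 * r = 0)).resolve_left h2
            linear_combination e2
          simp [f1, f2]
      by_cases hc : IsConjToSubgroupOf G (splitCartan ℓ)
      · obtain ⟨p, hp⟩ := hc
        exact Or.inr (Or.inl ⟨p, fun x hx => (hp x hx).2⟩)
      · refine Or.inr (Or.inr (Or.inr (Or.inl ⟨⟨P⁻¹, fun x hx => ?_⟩, hc⟩)))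
        exact dk_normalizer _ _ hS A.1 P hP x (hAG x hx)
    · obtain ⟨P, hP⟩ := dk_companion h2 ε h0 A.1 A.2.1 hd
      have hS : ∀ x : GL (Fin 2) (ZMod ℓ), x ∈ nonsplitCartan ℓ ε ↔
          x.val * !![0, ε; 1, 0] = !![0, ε; 1, 0] * x.val := by
        intro x
        obtain ⟨p, q, r, s, hx⟩ : ∃ a b c d, x.val = !![a, b; c, d] :=
          ⟨_, _, _, _, Matrix.eta_fin_two x.val⟩
        change x.val 1 1 = x.val 0 0 ∧ x.val 0 1 = ε * x.val 1 0 ↔ _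
        rw [hx]
        constructor
        · rintro ⟨h1, h3⟩
          simp only [Matrix.of_apply, Matrix.cons_val] at h1 h3
          subst h1 h3
          ext i j
          fin_cases i <;> fin_cases j <;> simp [Matrix.mul_apply, Fin.sum_univ_two] <;> ring
        · intro h
          have e1 := congrFun (congrFun h 0) 0
          have e2 := congrFun (congrFun h 1) 0
          simp [Matrix.mul_apply, Fin.sum_univ_two] at e1 e2
          simp [e1, e2]
      by_cases hc : IsConjToSubgroupOf G (nonsplitCartan ℓ ε)
      · exact Or.inr (Or.inr (Or.inl hc))
      · refine Or.inr (Or.inr (Or.inr (Or.inr (Or.inl ⟨⟨P⁻¹, fun x hx => ?_⟩, hc⟩))))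
        exact dk_normalizer _ _ hS A.1 P hP x (hAG x hx)
  · exact Or.inr (Or.inr (Or.inr (Or.inr (Or.inr h6))))
end

section
/- Let ℓ be a prime, let r ≥ 1, let Γ be a group, and let ρ₁, ρ₂ : Γ → GL_r(ℤ_ℓ) be group homomorphisms. Let A be the ℤ_ℓ-subalgebra of Mat_{r×r}(ℤ_ℓ) × Mat_{r×r}(ℤ_ℓ) generated by the image of Γ under the product map ρ₁ × ρ₂, let G′ be the image of Γ in A/ℓA, and let H be the image in A/ℓA of the set of pairs of scalar matrices {(μI_r, μI_r) : μ ∈ ℤ_ℓ^×}. Then H ∩ G′ is a normal subgroup of G′ and the quotient G := G′/(H ∩ G′) has order at most (ℓ^(2r²) − 1)/(ℓ − 1). -/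
set_option synthInstance.maxHeartbeats 400000
set_option maxHeartbeats 1000000

open Matrix

theorem stmt_11_aux (ℓ : ℕ) [hp : Fact ℓ.Prime] (N : ℕ) (hN : 0 < N) (Q : Type*) [Ring Q]
    [Finite Q] (hcard : Nat.card Q ≤ ℓ ^ N) (hl : (ℓ : Q) = 0) (G' H : Subgroup Qˣ)
    (hc : H ≤ Subgroup.center Qˣ)
    (hH : ∀ k : ℕ, ¬ ℓ ∣ k → ∃ u ∈ H, (u : Q) = k) :
    ((H ⊓ G').subgroupOf G').Normal ∧
      Finite (G' ⧸ (H ⊓ G').subgroupOf G') ∧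
      Nat.card (G' ⧸ (H ⊓ G').subgroupOf G') ≤ (ℓ ^ N - 1) / (ℓ - 1) := by
  have h2 : 2 ≤ ℓ := hp.out.two_le
  have hn : H.Normal := ⟨fun n hn g => by
    rw [← Subgroup.mem_center_iff.mp (hc hn) g |>.symm, mul_assoc, mul_inv_cancel, mul_one] <;> simpa using hn⟩
  rw [Subgroup.inf_subgroupOf_right]
  refine ⟨inferInstance, inferInstance, ?_⟩
  have hidx : Nat.card (G' ⧸ H.subgroupOf G') ≤ H.index := by
    have : H.relIndex G' ∣ H.index := Subgroup.relIndex_dvd_index_of_normal H G'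
    exact Nat.le_of_dvd (Nat.pos_of_ne_zero Subgroup.index_ne_zero_of_finite) this
  have hmul : Nat.card H * H.index = Nat.card Qˣ := Subgroup.card_mul_index H
  refine hidx.trans ?_
  rw [Nat.le_div_iff_mul_le (by omega)]
  rcases subsingleton_or_nontrivial Q with hs | hs
  · have h1 : Nat.card Qˣ = 1 := by
      have : Subsingleton Qˣ := ⟨fun a b => Units.ext (Subsingleton.elim _ _)⟩
      exact Nat.card_unique
    rw [h1] at hmul
    rw [Nat.eq_one_of_mul_eq_one_left hmul, one_mul]
    exact Nat.sub_le_sub_right (Nat.le_self_pow hN.ne' ℓ) 1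
  · have hchar : CharP Q ℓ := by
      obtain ⟨c, hcc⟩ := CharP.exists Q
      have hd := (CharP.cast_eq_zero_iff Q c ℓ).mp hl
      rcases (Nat.dvd_prime hp.out).mp hd with h | h
      · subst h; exact (CharP.char_ne_one Q 1 rfl).elim
      · exact h ▸ hcc
    have hHc : ℓ - 1 ≤ Nat.card H := by
      choose! u hu hu' using hH
      have hd : ∀ i : Fin (ℓ - 1), ¬ ℓ ∣ (i : ℕ) + 1 := fun i hi => by
        have := Nat.le_of_dvd (by omega) hi
        omega
      let φ : Fin (ℓ - 1) → H := fun i => ⟨u (i + 1), hu _ (hd i)⟩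
      have hφ : Function.Injective φ := by
        intro i j hij
        have h1 : ((u (i + 1) : Qˣ) : Q) = u (j + 1) := by
          have := congrArg Subtype.val hij
          exact congrArg Units.val this
        rw [hu' _ (hd i), hu' _ (hd j)] at h1
        have h3 := (CharP.cast_eq_iff_mod_eq Q ℓ).mp h1
        rw [Nat.mod_eq_of_lt (by omega), Nat.mod_eq_of_lt (by omega)] at h3
        exact Fin.ext (by omega)
      simpa using Nat.card_le_card_of_injective φ hφ
    have hU : Nat.card Qˣ + 1 ≤ Nat.card Q := by
      have hi : Function.Injective (fun o : Option Qˣ => o.elim (0 : Q) Units.val) := by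
        rintro (_ | a) (_ | b) hab
        · rfl
        · exact absurd hab.symm b.ne_zero
        · exact absurd hab a.ne_zero
        · exact congrArg some (Units.ext hab)
      simpa [Finite.card_option] using Nat.card_le_card_of_injective _ hi
    calc H.index * (ℓ - 1) ≤ H.index * Nat.card H := Nat.mul_le_mul_left _ hHc
      _ = Nat.card Qˣ := by rw [mul_comm, hmul]
      _ ≤ _ := by omega

theorem stmt_11_card (ℓ : ℕ) [hp : Fact ℓ.Prime] (N : ℕ) (M : Type*) [AddCommGroup M]
    [Module ℤ_[ℓ] M] [Module.Free ℤ_[ℓ] M] [Module.Finite ℤ_[ℓ] M]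
    (hM : Module.finrank ℤ_[ℓ] M ≤ N) (Q : Type*) (π : M → Q) (hπ : Function.Surjective π)
    (hq : ∀ x y : M, π (x + (ℓ : ℤ_[ℓ]) • y) = π x) : Finite Q ∧ Nat.card Q ≤ ℓ ^ N := by
  let b := Module.finBasis ℤ_[ℓ] M
  let g : (Fin (Module.finrank ℤ_[ℓ] M) → Fin ℓ) → Q :=
    fun c => π (∑ i, ((c i : ℕ) : ℤ_[ℓ]) • b i)
  have hg : Function.Surjective g := by
    intro q
    obtain ⟨m, rfl⟩ := hπ q
    have key : ∀ x : ℤ_[ℓ], ∃ (n : Fin ℓ) (y : ℤ_[ℓ]), x = ((n : ℕ) : ℤ_[ℓ]) + ℓ * y := by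
      intro x
      have h1 := PadicInt.sub_zmodRepr_mem x
      rw [PadicInt.maximalIdeal_eq_span_p, Ideal.mem_span_singleton] at h1
      obtain ⟨y, hy⟩ := h1
      exact ⟨⟨x.zmodRepr, PadicInt.zmodRepr_lt_p x⟩, y, by rw [← hy]; simp⟩
    choose n y hny using fun i => key (b.repr m i)
    refine ⟨n, ?_⟩
    have hm : m = ∑ i, ((n i : ℕ) : ℤ_[ℓ]) • b i + (ℓ : ℤ_[ℓ]) • ∑ i, y i • b i := by
      conv_lhs => rw [← b.sum_repr m]
      rw [Finset.smul_sum, ← Finset.sum_add_distrib]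
      refine Finset.sum_congr rfl fun i _ => ?_
      rw [smul_smul, ← add_smul, ← hny]
    conv_rhs => rw [hm, hq]
  refine ⟨Finite.of_surjective g hg, ?_⟩
  have h1 := Nat.card_le_card_of_surjective g hg
  have h2 : Nat.card (Fin (Module.finrank ℤ_[ℓ] M) → Fin ℓ) = ℓ ^ Module.finrank ℤ_[ℓ] M := by
    simp [Nat.card_eq_fintype_card]
  rw [h2] at h1
  exact h1.trans (Nat.pow_le_pow_right hp.out.pos hM)

/-- Let `A` be the `ℤ_ℓ`-subalgebra of `Mat_r(ℤ_ℓ) × Mat_r(ℤ_ℓ)` generated by the image of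
`Γ` under `ρ₁ × ρ₂`, let `G′` be the image of `Γ` in `A/ℓA`, and let `H` be the image in
`A/ℓA` of the invertible scalar pairs `{(μI, μI) : μ ∈ ℤ_ℓ^×}`.  Then `H ∩ G′` is normal in
`G′` and `G = G′/(H ∩ G′)` has order at most `(ℓ^(2r²) − 1)/(ℓ − 1)`.
Here `A/ℓA` is realized as the quotient of `A` by the two-sided ideal generated by `ℓ`,
`f : Γ → A/ℓA` and `h : ℤ_ℓ^× → A/ℓA` are the induced maps (landing in the unit group via
`MonoidHom.toHomUnits`), and `G′`, `H` are their ranges in `(A/ℓA)ˣ`. -/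
theorem stmt_11 (ℓ : ℕ) [Fact ℓ.Prime] (r : ℕ) (hr : 0 < r) (Γ : Type*) [Group Γ]
    (ρ₁ ρ₂ : Γ →* GL (Fin r) ℤ_[ℓ])
    (A : Subalgebra ℤ_[ℓ] (Matrix (Fin r) (Fin r) ℤ_[ℓ] × Matrix (Fin r) (Fin r) ℤ_[ℓ]))
    (hA : A = Algebra.adjoin ℤ_[ℓ] (Set.range fun γ : Γ =>
        ((ρ₁ γ : Matrix (Fin r) (Fin r) ℤ_[ℓ]), (ρ₂ γ : Matrix (Fin r) (Fin r) ℤ_[ℓ]))))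
    -- `f` is the map `Γ → A/ℓA` induced by `ρ₁ × ρ₂`
    (f : Γ →* (TwoSidedIdeal.span {(ℓ : A)}).ringCon.Quotient)
    (hf : ∀ (γ : Γ)
        (hmem : ((ρ₁ γ : Matrix (Fin r) (Fin r) ℤ_[ℓ]),
            (ρ₂ γ : Matrix (Fin r) (Fin r) ℤ_[ℓ])) ∈ A),
        f γ = ((⟨_, hmem⟩ : A) : (TwoSidedIdeal.span {(ℓ : A)}).ringCon.Quotient))
    -- `h` is the map `ℤ_ℓ^× → A/ℓA` sending `μ` to the image of the scalar pair `(μI, μI)`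
    (h : ℤ_[ℓ]ˣ →* (TwoSidedIdeal.span {(ℓ : A)}).ringCon.Quotient)
    (hh : ∀ μ : ℤ_[ℓ]ˣ,
        h μ = ((algebraMap ℤ_[ℓ] A (μ : ℤ_[ℓ])) :
          (TwoSidedIdeal.span {(ℓ : A)}).ringCon.Quotient)) :
    ∀ (G' H : Subgroup ((TwoSidedIdeal.span {(ℓ : A)}).ringCon.Quotient)ˣ),
      G' = (MonoidHom.toHomUnits f).range →
      H = (MonoidHom.toHomUnits h).range →
      ((H ⊓ G').subgroupOf G').Normal ∧
      Finite (G' ⧸ (H ⊓ G').subgroupOf G') ∧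
      Nat.card (G' ⧸ (H ⊓ G').subgroupOf G') ≤ (ℓ ^ (2 * r ^ 2) - 1) / (ℓ - 1) := by
  rintro G' H - rfl
  have hfr : Module.finrank ℤ_[ℓ] A ≤ 2 * r ^ 2 := by
    refine (Submodule.finrank_le (Subalgebra.toSubmodule A)).trans ?_
    rw [Module.finrank_prod, Module.finrank_matrix]
    simp
    apply le_of_eq
    ring
  have hfree : Module.Free ℤ_[ℓ] A :=
    inferInstanceAs (Module.Free ℤ_[ℓ] (Subalgebra.toSubmodule A))
  have hfin : Module.Finite ℤ_[ℓ] A :=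
    inferInstanceAs (Module.Finite ℤ_[ℓ] (Subalgebra.toSubmodule A))
  let π : A →+* (TwoSidedIdeal.span {(ℓ : A)}).ringCon.Quotient := RingCon.mk' _
  have hs : Function.Surjective π := RingCon.mk'_surjective _
  have hl : π (ℓ : A) = 0 := by
    have : (ℓ : A) ∈ TwoSidedIdeal.span {(ℓ : A)} := TwoSidedIdeal.subset_span rfl
    have h2 := (TwoSidedIdeal.mem_iff _ _).mp this
    rw [← map_zero π]
    exact (RingCon.eq _).mpr h2
  have hh' : ∀ μ : ℤ_[ℓ]ˣ, h μ = π (algebraMap ℤ_[ℓ] A μ) := hh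
  have hq : ∀ x y : A, π (x + (ℓ : ℤ_[ℓ]) • y) = π x := by
    intro x y
    rw [Algebra.smul_def, map_add, map_mul, map_natCast (algebraMap ℤ_[ℓ] A), hl, zero_mul,
      add_zero]
  obtain ⟨hQ, hcard⟩ := stmt_11_card ℓ (2 * r ^ 2) A hfr _ π hs hq
  refine stmt_11_aux ℓ (2 * r ^ 2) (by positivity) _ hcard (by rw [← map_natCast π, hl]) G' _ ?_ ?_
  · rintro _ ⟨μ, rfl⟩
    rw [Subgroup.mem_center_iff]
    intro g
    apply Units.ext
    obtain ⟨a, ha⟩ := hs g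
    rw [Units.val_mul, Units.val_mul, MonoidHom.coe_toHomUnits, hh', ← ha, ← map_mul, ← map_mul,
      Algebra.commutes]
  · intro k hk
    have hu : IsUnit (k : ℤ_[ℓ]) := by
      by_contra hcon
      rw [PadicInt.not_isUnit_iff] at hcon
      exact hk (by exact_mod_cast (PadicInt.norm_int_lt_one_iff_dvd (k : ℤ)).mp (by simpa using hcon))
    obtain ⟨μ, hμ⟩ := hu
    refine ⟨_, ⟨μ, rfl⟩, ?_⟩
    rw [MonoidHom.coe_toHomUnits, hh', hμ, map_natCast, map_natCast]
end
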